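/- arXiv:2010.08922 — 2 statements merged into one kernel-verified Lean document; each statement's English description precedes it below -/
import Mathlib

section
/- Let m ∈ ℕ be sufficiently large, let λ > 0, let 1 ≤ L < n be integers, and let A_1,…,A_m,B_1,…,B_m be complement-disjoint subsets of {1,…,n} of size n − L. Fix a symmetric n×n matrix M with ±1 entries such that every submatrix M[A_ℓ,B_ℓ] (ℓ = 1,…,m) is λ-heavy, and form a random symmetric (n+1)×(n+1) matrix M' by appending to M a new row and column whose entries x_1,…,x_n,z are independent Rademacher random variables (the new row and column are equal). Then with probability at least 1 − m^{-1/24}, setting m' = ⌈m/36⌉, there exist complement-disjoint subsets A'_1,…,A'_{m'},B'_1,…,B'_{m'} of {1,…,n+1} of size n − L + 2 such that every submatrix M'[A'_ℓ,B'_ℓ] (ℓ = 1,…,m') is λ/(4n^4)-heavy. -/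
/-!
Adding the new index to the row set and the column set of a submatrix `M[A', B']` turns its
permanent into a quadratic form in the off-diagonal new entries `x`. A `λ`-heavy `M[A, B]` can be
enlarged by one row and one column to such an `M[A', B']` for which the form has a coefficient of
absolute value at least `λ / 3` at a pair of positions in `Aᶜ ∪ Bᶜ`; by complement-disjointness
these pairs are disjoint for different members of the family.

Consider the graph of the entries of a form which are at least `λ / (4 n³)`. Either it contains a
matching of `m ^ (3 / 4)` edges, or its edges are covered by few vertices. In the first case the
form is unlikely to be small: decoupling the two sides of the matching leaves a linear form with
many large random coefficients. If the second case is the typical one, the forms are, up to small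
errors, affine off few coordinates, while flipping two coordinates prevents each of them from being
small, and these pairs of coordinates are disjoint. An affine form with many large coefficients is
rarely small, by the Littlewood–Offord inequality. If however the forms of a random tuple of
logarithmic length have few large coefficients, then they are approximately independent, and each
is small with probability at most `3 / 4`, by resampling its two coordinates. In both cases Markov's
inequality bounds the probability that most forms are small.
-/

open Finset

/-- The real number (`1` or `-1`) associated to a Boolean: a Rademacher value. -/
noncomputable def rad (b : Bool) : ℝ := if b then 1 else -1

/-- The permanent of the submatrix of `M` with row set `A` and column set `B`,
defined as a sum over all bijections between `A` and `B` (it equals `0` if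
`A.card ≠ B.card`). Since the permanent is invariant under row and column
permutations, this faithfully represents `per M[A,B]`. -/
noncomputable def permOn {m n : ℕ} (M : Matrix (Fin m) (Fin n) ℝ)
    (A : Finset (Fin m)) (B : Finset (Fin n)) : ℝ :=
  ∑ σ : {x // x ∈ A} ≃ {y // y ∈ B}, ∏ i : {x // x ∈ A}, M i.1 (σ i).1

/-- The random symmetric extension of a fixed `n' × n'` matrix `M` to an `n × n` matrix:
the top-left `n' × n'` block is `M`, and the remaining entries are Rademacher values
determined symmetrically by the Boolean data `ω`. As `ω` ranges uniformly over all Boolean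
data, the new entries (on and above the diagonal) are i.i.d. Rademacher random variables. -/
noncomputable def extSym {n' : ℕ} (n : ℕ) (M : Matrix (Fin n') (Fin n') ℝ)
    (ω : Fin n → Fin n → Bool) : Matrix (Fin n) (Fin n) ℝ :=
  fun i j =>
    if h : (i : ℕ) < n' ∧ (j : ℕ) < n' then M ⟨i, h.1⟩ ⟨j, h.2⟩
    else if i ≤ j then rad (ω i j) else rad (ω j i)

open Classical in
/-- The probability of the event `P` for the random symmetric extension of `M` to size `n`
(i.e. conditionally on the outcome `M` for the top-left block). -/
noncomputable def probExt {n' : ℕ} (n : ℕ) (M : Matrix (Fin n') (Fin n') ℝ)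
    (P : Matrix (Fin n) (Fin n) ℝ → Prop) : ℝ :=
  ((univ.filter fun ω : Fin n → Fin n → Bool => P (extSym n M ω)).card : ℝ) / 2 ^ (n * n)

/-- A family of subsets of `{1,…,n}` is complement-disjoint if the complements of its
members are pairwise disjoint. -/
def cdisj {n : ℕ} {ι : Type*} (S : ι → Finset (Fin n)) : Prop :=
  ∀ i j : ι, i ≠ j → Disjoint (S i)ᶜ (S j)ᶜ

open scoped BigOperators

/-! ### Uniform probability on finite types -/

open Classical in
/-- The probability that a uniformly random point of a finite type satisfies `p`. It is used both
on the cube of sign vectors and for proportions in finite index sets. -/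
noncomputable def prob {Ω : Type*} [Fintype Ω] (p : Ω → Prop) : ℝ := 𝔼 x, if p x then 1 else 0

section prob

variable {Ω Ω' : Type*} [Fintype Ω] [Fintype Ω'] {p q : Ω → Prop} {c : ℝ}

lemma prob_eq_card_div [DecidablePred p] : prob p = #{x | p x} / Fintype.card Ω := by
  rw [prob, Fintype.expect_eq_sum_div_card, ← sum_boole]
  congr!

lemma prob_nonneg : 0 ≤ prob p := expect_nonneg fun _ _ => by positivity

lemma prob_mono (h : ∀ x, p x → q x) : prob p ≤ prob q := by
  classical
  refine expect_le_expect fun x _ => ?_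
  by_cases hx : p x
  · simp [hx, h x hx]
  · simpa [hx] using by positivity

lemma prob_le_one : prob p ≤ 1 := by
  classical
  rw [prob_eq_card_div]
  exact div_le_one_of_le₀ (mod_cast card_le_univ _) (Nat.cast_nonneg _)

lemma prob_eq_zero (h : ∀ x, ¬ p x) : prob p = 0 :=
  expect_eq_zero fun x _ => if_neg (h x)

lemma prob_or_le : prob (fun x => p x ∨ q x) ≤ prob p + prob q := by
  classical
  rw [prob, prob, prob, ← expect_add_distrib]
  refine expect_le_expect fun x _ => ?_
  by_cases hp : p x <;> by_cases hq : q x <;> simp [hp, hq]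

lemma prob_exists_le {κ : Type*} [Fintype κ] (p : κ → Ω → Prop) :
    prob (fun x => ∃ k, p k x) ≤ ∑ k, prob (p k) := by
  classical
  simp only [prob]
  rw [← expect_sum_comm]
  refine expect_le_expect fun x _ => ?_
  split_ifs with h
  · obtain ⟨k, hk⟩ := h
    exact le_of_eq_of_le (if_pos hk).symm
      (single_le_sum (f := fun k => if p k x then (1 : ℝ) else 0)
        (fun k _ => by positivity) (mem_univ k))
  · exact sum_nonneg fun k _ => by positivity

lemma prob_add_prob_not [Nonempty Ω] : prob p + prob (fun x => ¬ p x) = 1 := by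
  classical
  rw [prob, prob, ← expect_add_distrib, ← Fintype.expect_const (ι := Ω) (1 : ℝ)]
  refine expect_congr rfl fun x _ => ?_
  by_cases hp : p x <;> simp [hp]

lemma one_sub_le_prob [Nonempty Ω] {c : ℝ} (hp : prob p ≤ c) (h : ∀ x, ¬ p x → q x) :
    1 - c ≤ prob q := by
  linarith [prob_add_prob_not (p := p), prob_mono h]

lemma prob_comp_equiv (e : Ω' ≃ Ω) : prob (fun x => p (e x)) = prob p :=
  Fintype.expect_equiv e _ _ fun _ => rfl

lemma expect_prob_comm (p : Ω → Ω' → Prop) :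
    𝔼 x, prob (p x) = 𝔼 y, prob (fun x => p x y) :=
  expect_comm _ _ _

lemma prob_le_of_forall_prod [Nonempty Ω] {p : Ω × Ω' → Prop}
    (h : ∀ x, prob (fun y => p (x, y)) ≤ c) : prob p ≤ c := by
  rw [prob, ← univ_product_univ, expect_product]
  exact expect_le univ_nonempty fun x _ => h x

lemma expect_prod_const [Nonempty Ω'] (F : Ω → ℝ) : 𝔼 x : Ω × Ω', F x.1 = 𝔼 x, F x := by
  rw [← univ_product_univ, expect_product]
  exact expect_congr rfl fun x _ => Fintype.expect_const (F x)

lemma mul_prob_le_expect {f : Ω → ℝ} (a : ℝ) (hf : ∀ x, 0 ≤ f x) :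
    a * prob (fun x => a ≤ f x) ≤ 𝔼 x, f x := by
  classical
  rw [prob, mul_expect]
  refine expect_le_expect fun x _ => ?_
  split_ifs with h
  · simpa using h
  · simpa using hf x

lemma prob_subtype_mul_prob_le (p q : Ω → Prop) [DecidablePred p] :
    prob (fun x : {x // p x} => q x) * prob p ≤ prob q := by
  classical
  rcases isEmpty_or_nonempty {x // p x} with hp | hp
  · rw [prob, univ_eq_empty, expect_empty, zero_mul]
    exact prob_nonneg
  · have hcard : #{x : {x // p x} | q x} ≤ #{x | q x} :=
      card_le_card_of_injOn Subtype.val (fun x hx => by simpa using hx)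
        Subtype.val_injective.injOn
    have hpos : (0 : ℝ) < Fintype.card {x // p x} := mod_cast Fintype.card_pos
    rw [prob_eq_card_div, prob_eq_card_div, prob_eq_card_div, ← Fintype.card_subtype p,
      div_mul_div_cancel₀ hpos.ne']
    gcongr

lemma prob_forall_comp (q : ℕ) (p : Ω → Prop) :
    prob (fun g : Fin q → Ω => ∀ i, p (g i)) = prob p ^ q := by
  classical
  rw [prob, prob, expect_pow, Fintype.piFinset_univ]
  refine expect_congr rfl fun g _ => ?_
  rw [Fintype.prod_boole]
  congr

end prob

/-! ### Resampling -/

section resampling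

variable {Ω Ω' ι β : Type*} [Fintype Ω] [Fintype Ω'] [Nonempty Ω'] {c : ℝ}

lemma expect_resample (e : Ω × Ω' ≃ Ω × Ω') (F : Ω → ℝ) :
    𝔼 x, 𝔼 y, F (e (x, y)).1 = 𝔼 x, F x := by
  rw [← expect_product', univ_product_univ, ← expect_prod_const (Ω' := Ω') F]
  exact Fintype.expect_equiv e _ _ fun _ => rfl

lemma prob_le_of_forall_resample [Nonempty Ω] {p : Ω → Prop} (e : Ω × Ω' ≃ Ω × Ω')
    (h : ∀ x, prob (fun y => p (e (x, y)).1) ≤ c) : prob p ≤ c := by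
  rw [prob, ← expect_resample e]
  exact expect_le univ_nonempty fun x _ => h x

variable [DecidableEq ι]

/-- Exchanging the coordinates outside `C` of two points. -/
def exchangeOff (C : Finset ι) : (ι → β) × (ι → β) ≃ (ι → β) × (ι → β) :=
  Function.Involutive.toPerm (fun x => (C.piecewise x.1 x.2, C.piecewise x.2 x.1)) fun x => by
    ext i <;> by_cases h : i ∈ C <;> simp [h]

/-- Exchanging the `i`-th coordinate of a tuple with another value. -/
def exchangeAt (i : ι) : (ι → β) × β ≃ (ι → β) × β :=
  Function.Involutive.toPerm (fun x => (Function.update x.1 i x.2, x.1 i)) fun x => by simp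

variable [Fintype ι] [Fintype β] [Nonempty β]

lemma expect_piecewise (C : Finset ι) (F : (ι → β) → ℝ) :
    𝔼 z, 𝔼 w, F (C.piecewise z w) = 𝔼 x, F x :=
  expect_resample (exchangeOff C) F

lemma prob_le_of_forall_piecewise {p : (ι → β) → Prop} (C : Finset ι)
    (h : ∀ z, prob (fun w => p (C.piecewise z w)) ≤ c) : prob p ≤ c :=
  prob_le_of_forall_resample (exchangeOff C) h

lemma prob_le_of_forall_update {p : (ι → β) → Prop} (i : ι)
    (h : ∀ x, prob (fun b => p (Function.update x i b)) ≤ c) : prob p ≤ c :=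
  prob_le_of_forall_resample (exchangeAt i) h

end resampling

/-! ### Random tuples -/

lemma prob_pair_le {Λ : Type*} [Fintype Λ] [Nonempty Λ] {c : ℝ} {R : Λ → Λ → Prop}
    (hR : ∀ ℓ, prob (R ℓ) ≤ c) {κ : Type*} [Fintype κ] [DecidableEq κ] {i j : κ} (hij : i ≠ j) :
    prob (fun g : κ → Λ => R (g i) (g j)) ≤ c := by
  refine prob_le_of_forall_update j fun g => ?_
  simpa only [Function.update_self, Function.update_of_ne hij] using hR (g i)

lemma pow_mul_prob_le {Ω Λ : Type*} [Fintype Ω] [Fintype Λ] [Nonempty Λ] (P : Λ → Ω → Prop) {c : ℝ}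
    (hc : 0 ≤ c) (q : ℕ) :
    c ^ q * prob (fun x => c ≤ prob fun ℓ => P ℓ x) ≤
      prob fun gx : (Fin q → Λ) × Ω => ∀ i, P (gx.1 i) gx.2 := by
  calc c ^ q * prob (fun x => c ≤ prob fun ℓ => P ℓ x)
      ≤ c ^ q * prob (fun x => c ^ q ≤ (prob fun ℓ => P ℓ x) ^ q) := by
        gcongr
        exact prob_mono fun x hx => pow_le_pow_left₀ hc hx q
    _ ≤ 𝔼 x, (prob fun ℓ => P ℓ x) ^ q := mul_prob_le_expect _ fun x => pow_nonneg prob_nonneg q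
    _ = _ := by
        simp only [← prob_forall_comp]
        rw [expect_prob_comm, prob, ← univ_product_univ, expect_product]
        rfl

/-! ### The Littlewood–Offord inequality -/

lemma centralBinom_sq_mul_le (k : ℕ) : k.centralBinom ^ 2 * (2 * k + 1) ≤ 16 ^ k := by
  induction k with
  | zero => simp
  | succ k ih =>
    refine Nat.le_of_mul_le_mul_left ?_ (by positivity : 0 < (k + 1) ^ 2)
    calc (k + 1) ^ 2 * ((k + 1).centralBinom ^ 2 * (2 * (k + 1) + 1))
        = ((k + 1) * (k + 1).centralBinom) ^ 2 * (2 * k + 3) := by ring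
      _ = 4 * (2 * k + 1) * (2 * k + 3) * (k.centralBinom ^ 2 * (2 * k + 1)) := by
        rw [Nat.succ_mul_centralBinom_succ k]; ring
      _ ≤ 4 * (2 * k + 1) * (2 * k + 3) * 16 ^ k := by gcongr
      _ ≤ (16 * (k + 1) ^ 2) * 16 ^ k := Nat.mul_le_mul_right _ (by nlinarith)
      _ = (k + 1) ^ 2 * 16 ^ (k + 1) := by ring

lemma centralBinom_succ_eq_two_mul_choose (k : ℕ) :
    (k + 1).centralBinom = 2 * (2 * k + 1).choose k := by
  rw [Nat.centralBinom_eq_two_mul_choose, show 2 * (k + 1) = (2 * k + 1) + 1 by ring,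
    Nat.choose_succ_succ, Nat.choose_symm_half]
  ring

lemma choose_half_sq_mul_le (n : ℕ) : n.choose (n / 2) ^ 2 * (n + 1) ≤ 4 ^ n := by
  rcases Nat.even_or_odd' n with ⟨k, rfl | rfl⟩
  · rw [Nat.mul_div_cancel_left k two_pos, ← Nat.centralBinom_eq_two_mul_choose, pow_mul]
    exact centralBinom_sq_mul_le k
  · have h := centralBinom_sq_mul_le (k + 1)
    rw [centralBinom_succ_eq_two_mul_choose, pow_succ 16] at h
    rw [show (2 * k + 1) / 2 = k by omega, pow_succ 4, pow_mul]
    norm_num only at h ⊢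
    nlinarith [sq_nonneg ((2 * k + 1).choose k)]

lemma choose_half_le (n : ℕ) : (n.choose (n / 2) : ℝ) ≤ 2 ^ n / √(n + 1) := by
  have h : (n.choose (n / 2) : ℝ) ^ 2 * (n + 1) ≤ (2 ^ n) ^ 2 := by
    rw [pow_right_comm]
    exact_mod_cast choose_half_sq_mul_le n
  rw [le_div_iff₀ (by positivity)]
  refine le_of_sq_le_sq ?_ (by positivity)
  rwa [mul_pow, Real.sq_sqrt (by positivity)]

section LittlewoodOfford

variable {ι : Type*} [Fintype ι] (l : ι → ℝ) (a : ℝ) {τ : ℝ}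

/-- The set of indices at which the sign vector `w` agrees with the signs of the coefficients `l`.
Passing to this set turns the sum `∑ j, l j * rad (w j)` into a monotone function. -/
noncomputable def alignedSet (w : ι → Bool) : Finset ι := {j | w j = decide (0 < l j)}

lemma alignedSet_injective : Function.Injective (alignedSet l) := by
  intro w w' h
  funext j
  have hj : j ∈ alignedSet l w ↔ j ∈ alignedSet l w' := by rw [h]
  simp only [alignedSet, mem_filter, mem_univ, true_and] at hj
  cases h1 : w j <;> cases h2 : w' j <;> cases h3 : decide (0 < l j) <;> simp_all

lemma sum_mul_rad_eq (w : ι → Bool) :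
    ∑ j, l j * rad (w j) = 2 * ∑ j ∈ alignedSet l w, |l j| - ∑ j, |l j| := by
  rw [alignedSet, sum_filter, mul_sum, ← sum_sub_distrib]
  refine sum_congr rfl fun j _ => ?_
  rcases lt_or_ge 0 (l j) with h | h
  · cases hw : w j <;> simp [rad, h, abs_of_pos, two_mul]
  · cases hw : w j <;> simp [rad, not_lt.2 h, abs_of_nonpos h, two_mul]

lemma isAntichain_image_alignedSet (hl : ∀ j, τ ≤ |l j|) :
    IsAntichain (· ⊆ ·)
      (alignedSet l '' {w | |a + ∑ j, l j * rad (w j)| < τ}) := by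
  rintro _ ⟨w, hw, rfl⟩ _ ⟨w', hw', rfl⟩ hne hsub
  classical
  obtain ⟨j, hj', hj⟩ := exists_of_ssubset (hsub.ssubset_of_ne hne)
  have hgap : ∑ i ∈ alignedSet l w, |l i| + |l j| ≤ ∑ i ∈ alignedSet l w', |l i| := by
    rw [← sum_sdiff hsub, add_comm]
    gcongr
    exact single_le_sum (f := fun i => |l i|) (fun i _ => abs_nonneg _) (mem_sdiff.2 ⟨hj', hj⟩)
  rw [Set.mem_ofPred_eq, sum_mul_rad_eq, abs_lt] at hw hw'
  linarith [hw.1, hw'.2, hl j]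

variable [DecidableEq ι]

lemma littlewoodOfford_of_forall_le (hl : ∀ j, τ ≤ |l j|) :
    prob (fun w : ι → Bool => |a + ∑ j, l j * rad (w j)| < τ) ≤ 1 / √(Fintype.card ι + 1) := by
  have hcard : (#{w : ι → Bool | |a + ∑ j, l j * rad (w j)| < τ} : ℝ) ≤
      2 ^ Fintype.card ι / √(Fintype.card ι + 1) := by
    refine le_trans ?_ (choose_half_le _)
    rw [← card_image_of_injective _ (alignedSet_injective l), Nat.cast_le]
    refine IsAntichain.sperner ?_
    simpa using isAntichain_image_alignedSet l a hl
  rw [prob_eq_card_div, Fintype.card_fun, Fintype.card_bool, div_le_iff₀ (by positivity)]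
  refine hcard.trans_eq ?_
  push_cast
  ring

lemma littlewoodOfford (τ : ℝ) :
    prob (fun w : ι → Bool => |a + ∑ j, l j * rad (w j)| < τ) ≤
      1 / √(#{j | τ ≤ |l j|} + 1) := by
  let e := Equiv.piEquivPiSubtypeProd (fun j => |l j| < τ) fun _ => Bool
  rw [← prob_comp_equiv e.symm]
  refine prob_le_of_forall_prod fun z => ?_
  have h := littlewoodOfford_of_forall_le (fun j : {j // ¬ |l j| < τ} => l j)
    (a + ∑ j : {j // |l j| < τ}, l j * rad (z j)) fun j => not_lt.1 j.2
  rw [Fintype.card_subtype, filter_congr fun j _ => not_lt] at h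
  refine le_trans (prob_mono fun w hw => ?_) h
  have hsmall (j : {j // |l j| < τ}) : e.symm (z, w) j = z j := by
    simp [e, Equiv.piEquivPiSubtypeProd, j.2]
  have hlarge (j : {j // ¬ |l j| < τ}) : e.symm (z, w) j = w j := by
    simp [e, Equiv.piEquivPiSubtypeProd, j.2]
  rw [← Fintype.sum_subtype_add_sum_subtype fun j => |l j| < τ, ← add_assoc] at hw
  simpa only [hsmall, hlarge] using hw

end LittlewoodOfford

/-! ### Avoidable events -/

section Avoidable

variable {ι κ : Type*} {D : Finset ι} {p q : (ι → Bool) → Prop}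

/-- An event on the cube is avoidable through the coordinates in `D` if, whatever the other
coordinates are, some choice of the coordinates in `D` makes it fail. -/
def Avoidable (D : Finset ι) (p : (ι → Bool) → Prop) : Prop :=
  ∀ x : ι → Bool, ∃ y : ι → Bool, (∀ v ∉ D, y v = x v) ∧ ¬ p y

lemma prob_le_of_not {Ω : Type*} [Fintype Ω] {p : Ω → Prop} {y : Ω} (hy : ¬ p y) :
    prob p ≤ 1 - 1 / Fintype.card Ω := by
  classical
  have hlt : #{x | p x} < Fintype.card Ω := card_lt_univ_of_notMem (x := y) (by simpa)
  have hpos : (0 : ℝ) < Fintype.card Ω := mod_cast hlt.pos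
  rw [prob_eq_card_div, div_le_iff₀ hpos, sub_mul, one_mul, one_div_mul_cancel hpos.ne',
    le_sub_iff_add_le]
  exact_mod_cast hlt

variable [DecidableEq ι]

lemma Avoidable.comp_piecewise {W : Finset ι} (z : ι → Bool) (h : Avoidable D p)
    (hDW : Disjoint D W) : Avoidable D fun x => p (W.piecewise z x) := by
  intro x
  obtain ⟨y, hyx, hy⟩ := h (W.piecewise z x)
  refine ⟨D.piecewise y x, fun v hv => piecewise_eq_of_notMem _ _ _ hv, ?_⟩
  convert hy using 2
  ext v
  by_cases hD : v ∈ D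
  · simp [hD, disjoint_left.1 hDW hD]
  · rw [hyx v hD]
    by_cases hW : v ∈ W <;> simp [hD, hW]

lemma dependsOn_comp_piecewise (W : Finset ι) (z : ι → Bool) :
    DependsOn (fun x => p (W.piecewise z x)) (W : Set ι)ᶜ := by
  intro x y hxy
  have : W.piecewise z x = W.piecewise z y :=
    piecewise_congr W (fun _ _ => rfl) fun v hv => hxy v hv
  simp only [this]

variable [Fintype ι]

lemma Avoidable.prob_and_le {r : ℕ} (h : Avoidable D p) (hD : #D ≤ r)
    (hq : DependsOn q (D : Set ι)ᶜ) :
    prob (fun x => q x ∧ p x) ≤ (1 - (1 / 2) ^ r) * prob q := by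
  let e := Equiv.piEquivPiSubtypeProd (· ∉ D) fun _ => Bool
  have hoff (z w) (v : ι) (hv : v ∉ D) : e.symm (z, w) v = z ⟨v, hv⟩ := by
    simp [e, Equiv.piEquivPiSubtypeProd, hv]
  have hcard : Fintype.card ({v // ¬ v ∉ D} → Bool) ≤ 2 ^ r := by
    simpa using Nat.pow_le_pow_right two_pos hD
  have hfibre (z) : prob (fun w => p (e.symm (z, w))) ≤ 1 - (1 / 2) ^ r := by
    obtain ⟨y, hyz, hy⟩ := h (e.symm (z, fun _ => false))
    have hz : (e y).1 = z := funext fun v => (hyz v v.2).trans (hoff _ _ _ v.2)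
    refine (prob_le_of_not (y := (e y).2) ?_).trans ?_
    · rwa [← hz, Prod.mk.eta, e.symm_apply_apply]
    · rw [one_div_pow]
      gcongr
      exact_mod_cast hcard
  rw [← prob_comp_equiv e.symm, ← prob_comp_equiv (p := q) e.symm, prob, prob,
    ← univ_product_univ, expect_product, expect_product, mul_expect]
  refine expect_le_expect fun z _ => ?_
  change prob (fun w => q (e.symm (z, w)) ∧ p (e.symm (z, w))) ≤
    _ * prob fun w => q (e.symm (z, w))
  have hconst (w) : q (e.symm (z, w)) = q (e.symm (z, fun _ => false)) :=
    hq fun v hv => (hoff _ _ v hv).trans (hoff _ _ v hv).symm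
  simp only [hconst]
  by_cases hz : q (e.symm (z, fun _ => false))
  · simp only [hz, true_and]
    simpa only [prob, if_true, Fintype.expect_const, mul_one] using hfibre z
  · simp [hz, prob]

lemma prob_forall_avoidable_le {r : ℕ} {D : κ → Finset ι} {p : κ → (ι → Bool) → Prop}
    (I : Finset κ) (hp : ∀ k, Avoidable (D k) (p k)) (hD : ∀ k, #(D k) ≤ r)
    (hind : ∀ i k, i ≠ k → DependsOn (p i) (D k : Set ι)ᶜ) :
    prob (fun x => ∀ k ∈ I, p k x) ≤ (1 - (1 / 2) ^ r) ^ #I := by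
  classical
  induction I using Finset.induction_on with
  | empty => simpa using prob_le_one
  | insert k I hk ih =>
    have hq : DependsOn (fun x => ∀ i ∈ I, p i x) (D k : Set ι)ᶜ := fun x y hxy =>
      propext <| forall₂_congr fun i hi => (hind i k (ne_of_mem_of_not_mem hi hk) hxy).to_iff
    have hhalf : (1 / 2 : ℝ) ^ r ≤ 1 := pow_le_one₀ (by norm_num) (by norm_num)
    rw [card_insert_of_notMem hk, pow_succ']
    simp only [forall_mem_insert, and_comm (a := p k _)]
    exact ((hp k).prob_and_le (hD k) hq).trans
      (mul_le_mul_of_nonneg_left ih (sub_nonneg.2 hhalf))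

end Avoidable

/-! ### Functions which are affine off a small set of coordinates -/

lemma card_not_disjoint_le {ι Λ : Type*} [DecidableEq ι] [Fintype Λ] {D : Λ → Finset ι}
    (hD : Pairwise fun k k' => Disjoint (D k) (D k')) (T : Finset ι) :
    #{k | ¬ Disjoint (D k) T} ≤ #T := by
  simp only [not_disjoint_iff]
  refine card_le_card_of_forall_subsingleton (fun k v => v ∈ D k) ?_ ?_
  · intro k hk
    obtain ⟨v, hvD, hvT⟩ := (mem_filter.1 hk).2
    exact ⟨v, hvT, hvD⟩
  · rintro v - k ⟨-, hk⟩ k' ⟨-, hk'⟩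
    by_contra hne
    exact disjoint_left.1 (hD hne) hk hk'

section AffineOff

variable {ι : Type*} [Fintype ι] [DecidableEq ι]

/-- A presentation of `f` as an affine function of the signs outside `C`, whose coefficients are
functions of the coordinates in `C`. -/
structure AffineOff (C : Finset ι) (f : (ι → Bool) → ℝ) where
  const : (ι → Bool) → ℝ
  coeff : ι → (ι → Bool) → ℝ
  dependsOn_const : DependsOn const C
  dependsOn_coeff : ∀ j, DependsOn (coeff j) C
  eq_add_sum : ∀ x, f x = const x + ∑ j ∈ Cᶜ, coeff j x * rad (x j)

namespace AffineOff

variable {C : Finset ι} {f : (ι → Bool) → ℝ} (h : AffineOff C f) (δ : ℝ)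

/-- The indices outside `C` whose coefficient at `x` has absolute value at least `δ`. -/
noncomputable def largeCoeffs (x : ι → Bool) : Finset ι := {j ∈ Cᶜ | δ ≤ |h.coeff j x|}

lemma dependsOn_largeCoeffs : DependsOn (h.largeCoeffs δ) C := fun _ _ hxy =>
  filter_congr fun j _ => by rw [h.dependsOn_coeff j hxy]

lemma apply_piecewise (z w : ι → Bool) : f (C.piecewise z w) =
    h.const z + ∑ j, (if j ∈ C then 0 else h.coeff j z) * rad (w j) := by
  have hzero : ∑ j ∈ C, (if j ∈ C then 0 else h.coeff j z) * rad (w j) = 0 :=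
    sum_eq_zero fun j hj => by rw [if_pos hj, zero_mul]
  have hz : ∀ v ∈ (C : Set ι), C.piecewise z w v = z v := fun v hv =>
    piecewise_eq_of_mem _ _ _ hv
  rw [h.eq_add_sum, h.dependsOn_const hz, ← sum_add_sum_compl C, hzero, zero_add]
  congr 1
  refine sum_congr rfl fun j hj => ?_
  rw [mem_compl] at hj
  rw [h.dependsOn_coeff j hz, if_neg hj, piecewise_eq_of_notMem _ _ _ hj]

lemma prob_abs_lt_and_le_card (t : ℕ) :
    prob (fun x => |f x| < δ ∧ t ≤ #(h.largeCoeffs δ x)) ≤ 1 / √(t + 1) := by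
  refine prob_le_of_forall_piecewise C fun z => ?_
  have hlarge (w) : h.largeCoeffs δ (C.piecewise z w) = h.largeCoeffs δ z :=
    h.dependsOn_largeCoeffs δ fun v hv => piecewise_eq_of_mem _ _ _ hv
  simp only [h.apply_piecewise, hlarge]
  by_cases ht : t ≤ #(h.largeCoeffs δ z)
  · simp only [ht, and_true]
    refine (littlewoodOfford _ _ δ).trans ?_
    gcongr
    refine ht.trans (card_le_card fun j hj => ?_)
    simp only [largeCoeffs, mem_filter, mem_compl] at hj
    simpa [hj.1] using hj.2
  · simpa only [ht, and_false, prob_eq_zero fun _ => not_false] using by positivity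

lemma abs_sub_le {δ : ℝ} {x y : ι → Bool} {W : Finset ι} (hxy : ∀ v ∉ W, y v = x v)
    (hW : Disjoint W (C ∪ h.largeCoeffs δ x)) : |f y - f x| ≤ #W * (2 * δ) := by
  obtain ⟨hWC, hWlarge⟩ := disjoint_union_right.1 hW
  have hagree : ∀ v ∈ (C : Set ι), y v = x v := fun v hv =>
    hxy v (disjoint_right.1 hWC hv)
  have hterm : ∀ j ∈ Cᶜ, |h.coeff j x * rad (y j) - h.coeff j x * rad (x j)| ≤
      if j ∈ W then 2 * δ else 0 := fun j hj => by
    split_ifs with hjW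
    · have hsmall : |h.coeff j x| < δ := by
        by_contra! hle
        exact disjoint_left.1 hWlarge hjW (mem_filter.2 ⟨hj, hle⟩)
      have hrad : |rad (y j) - rad (x j)| ≤ 2 := by
        cases y j <;> cases x j <;> norm_num [rad]
      rw [← mul_sub, abs_mul, mul_comm]
      exact mul_le_mul hrad hsmall.le (abs_nonneg _) zero_le_two
    · rw [hxy j hjW, sub_self, abs_zero]
  calc |f y - f x|
      = |∑ j ∈ Cᶜ, (h.coeff j x * rad (y j) - h.coeff j x * rad (x j))| := by
        rw [h.eq_add_sum, h.eq_add_sum, h.dependsOn_const hagree, sum_sub_distrib,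
          add_sub_add_left_eq_sub]
        simp only [h.dependsOn_coeff _ hagree]
    _ ≤ ∑ j ∈ Cᶜ, if j ∈ W then 2 * δ else 0 :=
        (abs_sum_le_sum_abs _ _).trans (sum_le_sum hterm)
    _ = #W * (2 * δ) := by
        have hsub : W ⊆ Cᶜ := fun j hj => mem_compl.2 (disjoint_left.1 hWC hj)
        rw [← sum_filter, filter_mem_eq_inter, inter_eq_right.2 hsub, sum_const, nsmul_eq_mul]

end AffineOff

/-- If a coordinate of some other member of the family influences `f i` through neither `C i` nor a
large coefficient, then `f i` hardly changes when those coordinates are fixed. The modified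
functions depend on disjoint sets of private coordinates. -/
lemma prob_forall_abs_lt_and_disjoint_le {κ : Type*} [Fintype κ]
    {f : κ → (ι → Bool) → ℝ} {C D : κ → Finset ι} (h : ∀ i, AffineOff (C i) (f i)) {τ δ : ℝ}
    {r : ℕ} (hδ : 0 ≤ δ) (hδτ : (1 + 2 * r * Fintype.card κ) * δ ≤ τ)
    (hDC : ∀ i, D i ⊆ C i) (hD : ∀ i, #(D i) ≤ r)
    (havoid : ∀ i, Avoidable (D i) fun x => |f i x| < τ) :
    prob (fun x => (∀ i, |f i x| < δ) ∧
        ∀ i j, i ≠ j → Disjoint (D j) (C i ∪ (h i).largeCoeffs δ x)) ≤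
      (1 - (1 / 2) ^ r) ^ Fintype.card κ := by
  by_cases hdisj : ∀ i j, i ≠ j → Disjoint (D j) (C i)
  swap
  · rw [prob_eq_zero]
    · exact pow_nonneg (sub_nonneg.2 (pow_le_one₀ (by norm_num) (by norm_num))) _
    · exact fun x hx => hdisj fun i j hij => (disjoint_union_right.1 (hx.2 i j hij)).1
  classical
  let others (i : κ) : Finset ι := (univ.erase i).biUnion D
  have hmem_others {i j : κ} (hij : i ≠ j) : D j ⊆ others i :=
    subset_biUnion_of_mem D (mem_erase.2 ⟨hij.symm, mem_univ j⟩)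
  have hcard (i) : (#(others i) : ℝ) ≤ Fintype.card κ * r := by
    exact_mod_cast (card_biUnion_le_card_mul _ _ _ fun k _ => hD k).trans
      (Nat.mul_le_mul_right r (card_le_univ _))
  let reset (i : κ) (x : ι → Bool) : ι → Bool := (others i).piecewise (fun _ => false) x
  have hreset : prob (fun x => ∀ i ∈ univ, |f i (reset i x)| < τ) ≤
      (1 - (1 / 2) ^ r) ^ Fintype.card κ := by
    refine prob_forall_avoidable_le univ (fun i => (havoid i).comp_piecewise _ ?_) hD ?_
    · refine (disjoint_biUnion_right _ _ _).2 fun j hj => ?_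
      exact ((hdisj i j (ne_of_mem_erase hj).symm).mono_right (hDC i)).symm
    · exact fun i k hik => (dependsOn_comp_piecewise (p := fun x => |f i x| < τ) _ _).mono
        (Set.compl_subset_compl.2 (coe_subset.2 (hmem_others hik)))
  refine (prob_mono fun x hx i _ => ?_).trans hreset
  have hclose : |f i (reset i x) - f i x| ≤ #(others i) * (2 * δ) :=
    (h i).abs_sub_le (fun v hv => piecewise_eq_of_notMem _ _ _ hv)
      ((disjoint_biUnion_left _ _ _).2 fun j hj => hx.2 i j (ne_of_mem_erase hj).symm)
  have hcardδ : #(others i) * (2 * δ) ≤ Fintype.card κ * r * (2 * δ) := by gcongr; exact hcard i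
  linarith [hx.1 i, abs_sub_abs_le_abs_sub (f i (reset i x)) (f i x)]

end AffineOff

/-! ### Most members of a family of affine functions are large -/

section Tuples

variable {ι Λ : Type*} [Fintype ι] [DecidableEq ι] [Fintype Λ] [Nonempty Λ]
  {f : Λ → (ι → Bool) → ℝ} {C D : Λ → Finset ι} {τ δ : ℝ} {r s : ℕ}

lemma prob_exists_abs_lt_and_le_card_le (h : ∀ ℓ, AffineOff (C ℓ) (f ℓ)) (q t : ℕ) :
    prob (fun gx : (Fin q → Λ) × (ι → Bool) =>
      ∃ i, |f (gx.1 i) gx.2| < δ ∧ t ≤ #((h (gx.1 i)).largeCoeffs δ gx.2)) ≤ q / √(t + 1) := by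
  refine prob_le_of_forall_prod fun g => (prob_exists_le _).trans ?_
  refine (sum_le_sum fun i _ => (h (g i)).prob_abs_lt_and_le_card δ t).trans_eq ?_
  rw [sum_const, card_univ, Fintype.card_fin, nsmul_eq_mul, mul_one_div]

lemma prob_exists_not_disjoint_le {T : Λ → (ι → Bool) → Finset ι}
    (hD : Pairwise fun k k' => Disjoint (D k) (D k')) (q t : ℕ) :
    prob (fun gx : (Fin q → Λ) × (ι → Bool) => ∃ ij : Fin q × Fin q, ij.1 ≠ ij.2 ∧
      #(T (gx.1 ij.1) gx.2) ≤ t ∧ ¬ Disjoint (D (gx.1 ij.2)) (T (gx.1 ij.1) gx.2)) ≤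
      q ^ 2 * (t / Fintype.card Λ) := by
  have htouch (x : ι → Bool) (ℓ : Λ) : prob (fun k => #(T ℓ x) ≤ t ∧ ¬ Disjoint (D k) (T ℓ x)) ≤
      t / Fintype.card Λ := by
    by_cases ht : #(T ℓ x) ≤ t
    · simp only [ht, true_and]
      rw [prob_eq_card_div]
      gcongr
      exact (card_not_disjoint_le hD _).trans ht
    · rw [prob_eq_zero fun k hk => ht hk.1]
      positivity
  rw [← prob_comp_equiv (Equiv.prodComm _ _)]
  refine prob_le_of_forall_prod fun x => (prob_exists_le _).trans ?_
  refine (sum_le_card_nsmul _ _ (t / Fintype.card Λ : ℝ) fun ij _ => ?_).trans_eq ?_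
  · by_cases hij : ij.1 = ij.2
    · rw [prob_eq_zero fun g hg => hg.1 hij]
      positivity
    · exact (prob_mono fun g hg => hg.2).trans (prob_pair_le (htouch x) hij)
  · rw [card_univ, Fintype.card_prod, Fintype.card_fin, nsmul_eq_mul, Nat.cast_mul, sq]

lemma prob_forall_tuple_abs_lt_le (h : ∀ ℓ, AffineOff (C ℓ) (f ℓ)) (q t : ℕ) (hδ : 0 ≤ δ)
    (hδτ : (1 + 2 * r * q) * δ ≤ τ) (hDC : ∀ ℓ, D ℓ ⊆ C ℓ) (hDr : ∀ ℓ, #(D ℓ) ≤ r)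
    (hD : Pairwise fun k k' => Disjoint (D k) (D k')) (hC : ∀ ℓ, #(C ℓ) ≤ s)
    (havoid : ∀ ℓ, Avoidable (D ℓ) fun x => |f ℓ x| < τ) :
    prob (fun gx : (Fin q → Λ) × (ι → Bool) => ∀ i, |f (gx.1 i) gx.2| < δ) ≤
      (1 - (1 / 2) ^ r) ^ q + q / √(t + 1) + q ^ 2 * ((s + t : ℕ) / Fintype.card Λ) := by
  let T (ℓ : Λ) (x : ι → Bool) : Finset ι := C ℓ ∪ (h ℓ).largeCoeffs δ x
  have hindependent : prob (fun gx : (Fin q → Λ) × (ι → Bool) => (∀ i, |f (gx.1 i) gx.2| < δ) ∧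
      ∀ i j, i ≠ j → Disjoint (D (gx.1 j)) (T (gx.1 i) gx.2)) ≤ (1 - (1 / 2) ^ r) ^ q :=
    prob_le_of_forall_prod fun g => by
      simpa only [Fintype.card_fin] using prob_forall_abs_lt_and_disjoint_le
        (fun i => h (g i)) hδ (by rwa [Fintype.card_fin]) (fun i => hDC (g i))
        (fun i => hDr (g i)) fun i => havoid (g i)
  refine (prob_mono fun gx hgx => ?_).trans <| (prob_or_le.trans <| add_le_add_left
    prob_or_le _).trans <| add_le_add (add_le_add hindependent
      (prob_exists_abs_lt_and_le_card_le (δ := δ) h q t))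
      (prob_exists_not_disjoint_le (T := T) hD q (s + t))
  by_cases hlarge : ∃ i, t ≤ #((h (gx.1 i)).largeCoeffs δ gx.2)
  · obtain ⟨i, hi⟩ := hlarge
    exact Or.inl (Or.inr ⟨i, hgx i, hi⟩)
  by_cases hdisj : ∀ i j, i ≠ j → Disjoint (D (gx.1 j)) (T (gx.1 i) gx.2)
  · exact Or.inl (Or.inl ⟨hgx, hdisj⟩)
  push Not at hlarge hdisj
  obtain ⟨i, j, hij, hmeet⟩ := hdisj
  exact Or.inr ⟨(i, j), hij, (card_union_le _ _).trans (add_le_add (hC _) (hlarge i).le), hmeet⟩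

lemma pow_mul_prob_prob_lt_le {Ω : Type*} [Fintype Ω] {f : Λ → Ω → ℝ} {c : ℝ} (hc : c ≤ 1) (q : ℕ) :
    (1 - c) ^ q * prob (fun x => prob (fun ℓ => δ ≤ |f ℓ x|) < c) ≤
      prob fun gx : (Fin q → Λ) × Ω => ∀ i, |f (gx.1 i) gx.2| < δ := by
  refine (mul_le_mul_of_nonneg_left (prob_mono fun x hx => ?_)
    (pow_nonneg (sub_nonneg.2 hc) q)).trans
      (pow_mul_prob_le (fun ℓ x => |f ℓ x| < δ) (sub_nonneg.2 hc) q)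
  have := prob_add_prob_not (p := fun ℓ => δ ≤ |f ℓ x|)
  simp only [not_le] at this
  linarith

end Tuples

section Numerics

variable {a c μ : ℝ}

/-- The growth conditions on the size `μ` of a family under which tuples of length `⌈log μ⌉₊` give
a bound by a negative power of `μ`. -/
def LargeEnough (μ : ℝ) : Prop :=
  1 ≤ μ ∧ ⌈Real.log μ⌉₊ ≤ μ ^ (1 / 100 : ℝ) ∧ 27 ≤ μ ^ (1 / 50 : ℝ)

lemma eventually_largeEnough : ∀ᶠ μ : ℝ in Filter.atTop, LargeEnough μ := by
  have hlog : ∀ᶠ μ : ℝ in Filter.atTop, ‖Real.log μ‖ ≤ 1 / 2 * ‖μ ^ (1 / 100 : ℝ)‖ :=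
    (isLittleO_log_rpow_atTop (by norm_num : (0 : ℝ) < 1 / 100)).bound (by norm_num)
  have hpow (K : ℝ) {c : ℝ} (hc : 0 < c) : ∀ᶠ μ : ℝ in Filter.atTop, K ≤ μ ^ c :=
    (tendsto_rpow_atTop hc).eventually_ge_atTop K
  filter_upwards [hlog, hpow 2 (by norm_num : (0 : ℝ) < 1 / 100),
    hpow 27 (by norm_num : (0 : ℝ) < 1 / 50), Filter.eventually_ge_atTop 1] with μ hlog h2 h27 h1
  have hlog0 : 0 ≤ Real.log μ := Real.log_nonneg h1
  rw [Real.norm_of_nonneg hlog0, Real.norm_of_nonneg (by positivity)] at hlog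
  exact ⟨h1, by linarith [Nat.ceil_lt_add_one hlog0], h27⟩

lemma pow_ceil_log_le (ha : 0 ≤ a) (hc : 0 ≤ c) (hac : a ≤ Real.exp (-c)) (hμ : 0 < μ) :
    a ^ ⌈Real.log μ⌉₊ ≤ μ ^ (-c) := by
  calc a ^ ⌈Real.log μ⌉₊ ≤ Real.exp (-c) ^ ⌈Real.log μ⌉₊ := pow_le_pow_left₀ ha hac _
    _ = Real.exp (⌈Real.log μ⌉₊ * -c) := (Real.exp_nat_mul _ _).symm
    _ ≤ Real.exp (Real.log μ * -c) := Real.exp_le_exp.2 <|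
        mul_le_mul_of_nonpos_right (Nat.le_ceil _) (neg_nonpos.2 hc)
    _ = μ ^ (-c) := (Real.rpow_def_of_pos hμ _).symm

lemma pow_ceil_log_le_mul (ha : 0 ≤ a) (hc : 0 ≤ c) (hac : a ≤ Real.exp c) (hμ : 1 ≤ μ) :
    a ^ ⌈Real.log μ⌉₊ ≤ Real.exp c * μ ^ c := by
  have hceil : (⌈Real.log μ⌉₊ : ℝ) ≤ 1 + Real.log μ := by
    linarith [Nat.ceil_lt_add_one (Real.log_nonneg hμ)]
  calc a ^ ⌈Real.log μ⌉₊ ≤ Real.exp c ^ ⌈Real.log μ⌉₊ := pow_le_pow_left₀ ha hac _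
    _ = Real.exp (⌈Real.log μ⌉₊ * c) := (Real.exp_nat_mul _ _).symm
    _ ≤ Real.exp ((1 + Real.log μ) * c) := Real.exp_le_exp.2 (by gcongr)
    _ = Real.exp c * μ ^ c := by
        rw [Real.rpow_def_of_pos (by positivity), ← Real.exp_add, add_mul, one_mul]

lemma LargeEnough.mul_le (h : LargeEnough μ) : 1 + 2 * (2 : ℕ) * ⌈Real.log μ⌉₊ ≤ μ := by
  obtain ⟨h1, hq, h27⟩ := h
  have hone : 1 ≤ μ ^ (1 / 100 : ℝ) := Real.one_le_rpow h1 (by norm_num)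
  calc 1 + 2 * (2 : ℕ) * ⌈Real.log μ⌉₊ ≤ 27 * μ ^ (1 / 100 : ℝ) := by push_cast; linarith
    _ ≤ μ ^ (1 / 50 : ℝ) * μ ^ (1 / 100 : ℝ) := by gcongr
    _ ≤ μ ^ (1 : ℝ) := by
        rw [← Real.rpow_add (by positivity)]
        exact Real.rpow_le_rpow_of_exponent_le h1 (by norm_num)
    _ = μ := Real.rpow_one μ

lemma LargeEnough.ceil_log_div_sqrt_le (h : LargeEnough μ) :
    ⌈Real.log μ⌉₊ / √(⌈√μ⌉₊ + 1) ≤ μ ^ (1 / 50 - 1 / 4 : ℝ) := by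
  obtain ⟨h1, hq, -⟩ := h
  have h0 : 0 < μ := by positivity
  have hroot : μ ^ (1 / 4 : ℝ) ≤ √(⌈√μ⌉₊ + 1) := by
    rw [show (1 / 4 : ℝ) = 1 / 2 * (1 / 2) by norm_num, Real.rpow_mul h0.le,
      ← Real.sqrt_eq_rpow, ← Real.sqrt_eq_rpow]
    exact Real.sqrt_le_sqrt (by linarith [Nat.le_ceil √μ])
  rw [Real.rpow_sub h0]
  gcongr
  exact hq.trans (Real.rpow_le_rpow_of_exponent_le h1 (by norm_num))

lemma LargeEnough.sq_ceil_log_mul_div_le (h : LargeEnough μ) {s : ℕ}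
    (hs : s ≤ 10 * μ ^ (3 / 4 : ℝ)) :
    ⌈Real.log μ⌉₊ ^ 2 * ((s + ⌈√μ⌉₊ : ℕ) / μ) ≤ 12 * μ ^ (1 / 50 - 1 / 4 : ℝ) := by
  obtain ⟨h1, hq, -⟩ := h
  have h0 : 0 < μ := by positivity
  have hsqrt : √μ ≤ μ ^ (3 / 4 : ℝ) :=
    Real.sqrt_eq_rpow μ ▸ Real.rpow_le_rpow_of_exponent_le h1 (by norm_num)
  have hone : 1 ≤ μ ^ (3 / 4 : ℝ) := Real.one_le_rpow h1 (by norm_num)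
  calc (⌈Real.log μ⌉₊ : ℝ) ^ 2 * ((s + ⌈√μ⌉₊ : ℕ) / μ)
      ≤ (μ ^ (1 / 100 : ℝ)) ^ 2 * (12 * μ ^ (3 / 4 : ℝ) / μ) := by
        gcongr
        push_cast
        linarith [Nat.ceil_lt_add_one μ.sqrt_nonneg]
    _ = 12 * μ ^ (1 / 50 - 1 / 4 : ℝ) := by
        rw [mul_div_assoc, ← Real.rpow_sub_one h0.ne', mul_left_comm,
          ← Real.rpow_mul_natCast h0.le, ← Real.rpow_add h0]
        norm_num

lemma LargeEnough.tuple_bound_le (h : LargeEnough μ) {s : ℕ} (hs : s ≤ 10 * μ ^ (3 / 4 : ℝ)) :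
    (18 / 17 : ℝ) ^ ⌈Real.log μ⌉₊ * ((1 - (1 / 2) ^ 2) ^ ⌈Real.log μ⌉₊ +
      ⌈Real.log μ⌉₊ / √(⌈√μ⌉₊ + 1) + ⌈Real.log μ⌉₊ ^ 2 * ((s + ⌈√μ⌉₊ : ℕ) / μ)) ≤
      μ ^ (-(1 / 7) : ℝ) := by
  have hlarge := h.ceil_log_div_sqrt_le
  have hmeet := h.sq_ceil_log_mul_div_le hs
  obtain ⟨h1, -, h27⟩ := h
  have h0 : 0 < μ := by positivity
  have hmono {x y : ℝ} (hxy : x ≤ y) : μ ^ x ≤ μ ^ y := Real.rpow_le_rpow_of_exponent_le h1 hxy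
  set q := ⌈Real.log μ⌉₊
  have hindependent : (18 / 17 : ℝ) ^ q * (1 - (1 / 2) ^ 2) ^ q ≤ μ ^ (-(1 / 5) : ℝ) := by
    rw [← mul_pow]
    exact pow_ceil_log_le (by norm_num) (by norm_num)
      (by linarith [Real.add_one_le_exp (-(1 / 5) : ℝ)]) h0
  have hgrowth : (18 / 17 : ℝ) ^ q ≤ 2 * μ ^ (1 / 17 : ℝ) := by
    refine (pow_ceil_log_le_mul (c := 1 / 17) (by norm_num) (by norm_num)
      (by linarith [Real.add_one_le_exp (1 / 17 : ℝ)]) h1).trans ?_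
    gcongr
    rw [← Real.le_log_iff_exp_le two_pos]
    linarith [Real.log_two_gt_d9]
  calc _ = (18 / 17 : ℝ) ^ q * (1 - (1 / 2) ^ 2) ^ q +
        (18 / 17 : ℝ) ^ q * (q / √(⌈√μ⌉₊ + 1) + q ^ 2 * ((s + ⌈√μ⌉₊ : ℕ) / μ)) := by ring
    _ ≤ μ ^ (-(1 / 5) : ℝ) + 2 * μ ^ (1 / 17 : ℝ) *
        (μ ^ (1 / 50 - 1 / 4 : ℝ) + 12 * μ ^ (1 / 50 - 1 / 4 : ℝ)) := by gcongr
    _ = μ ^ (-(1 / 5) : ℝ) + 26 * μ ^ (1 / 17 + (1 / 50 - 1 / 4) : ℝ) := by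
        rw [Real.rpow_add h0]; ring
    _ ≤ μ ^ (-(17 / 100) : ℝ) + 26 * μ ^ (-(17 / 100) : ℝ) := by
        gcongr ?_ + 26 * ?_ <;> exact hmono (by norm_num)
    _ = 27 * μ ^ (-(17 / 100) : ℝ) := by ring
    _ ≤ μ ^ (1 / 50 : ℝ) * μ ^ (-(17 / 100) : ℝ) := by gcongr
    _ ≤ μ ^ (-(1 / 7) : ℝ) := by rw [← Real.rpow_add h0]; exact hmono (by norm_num)

end Numerics

section Family

variable {ι Λ : Type*} [Fintype ι] [DecidableEq ι] [Fintype Λ]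
  {f : Λ → (ι → Bool) → ℝ} {C D : Λ → Finset ι} {τ δ : ℝ}

theorem prob_prob_le_abs_lt_le (h : ∀ ℓ, AffineOff (C ℓ) (f ℓ))
    (hΛ : LargeEnough (Fintype.card Λ : ℝ)) (hδ : 0 ≤ δ) (hδτ : (Fintype.card Λ : ℝ) * δ ≤ τ)
    (hDC : ∀ ℓ, D ℓ ⊆ C ℓ) (hD2 : ∀ ℓ, #(D ℓ) ≤ 2)
    (hD : Pairwise fun k k' => Disjoint (D k) (D k'))
    (hC : ∀ ℓ, #(C ℓ) ≤ 10 * (Fintype.card Λ : ℝ) ^ (3 / 4 : ℝ))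
    (havoid : ∀ ℓ, Avoidable (D ℓ) fun x => |f ℓ x| < τ) :
    prob (fun x => prob (fun ℓ => δ ≤ |f ℓ x|) < 1 / 18) ≤
      (Fintype.card Λ : ℝ) ^ (-(1 / 7) : ℝ) := by
  set μ := (Fintype.card Λ : ℝ)
  set q := ⌈Real.log μ⌉₊
  have : Nonempty Λ := Fintype.card_pos_iff.1 (Nat.one_le_cast.1 hΛ.1)
  have htuple := prob_forall_tuple_abs_lt_le (s := ⌊10 * μ ^ (3 / 4 : ℝ)⌋₊) h q ⌈√μ⌉₊ hδ
    ((mul_le_mul_of_nonneg_right hΛ.mul_le hδ).trans hδτ) hDC hD2 hD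
    (fun ℓ => Nat.le_floor (hC ℓ)) havoid
  calc prob (fun x => prob (fun ℓ => δ ≤ |f ℓ x|) < 1 / 18)
      = (18 / 17) ^ q * ((1 - 1 / 18) ^ q *
          prob (fun x => prob (fun ℓ => δ ≤ |f ℓ x|) < 1 / 18)) := by
        rw [← mul_assoc, ← mul_pow]
        norm_num
    _ ≤ μ ^ (-(1 / 7) : ℝ) :=
        (mul_le_mul_of_nonneg_left ((pow_mul_prob_prob_lt_le (by norm_num) q).trans htuple)
          (by positivity)).trans (hΛ.tuple_bound_le (Nat.floor_le (by positivity)))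

theorem prob_prob_le_abs_linear_lt_le {c : Λ → ℝ} {l : Λ → ι → ℝ} {e : Λ → ι}
    (hΛ : LargeEnough (Fintype.card Λ : ℝ)) (hδ : 0 ≤ δ) (hδτ : (Fintype.card Λ : ℝ) * δ ≤ τ)
    (he : Function.Injective e) (hl : ∀ ℓ, τ ≤ |l ℓ (e ℓ)|) :
    prob (fun x : ι → Bool => prob (fun ℓ => δ ≤ |c ℓ + ∑ j, l ℓ j * rad (x j)|) < 1 / 18) ≤
      (Fintype.card Λ : ℝ) ^ (-(1 / 7) : ℝ) := by
  have haffine (ℓ) : AffineOff {e ℓ} fun x => c ℓ + ∑ j, l ℓ j * rad (x j) :=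
    { const := fun x => c ℓ + l ℓ (e ℓ) * rad (x (e ℓ))
      coeff := fun j _ => l ℓ j
      dependsOn_const := fun x y hxy => by simp only [hxy (e ℓ) (by simp)]
      dependsOn_coeff := fun _ _ _ _ => rfl
      eq_add_sum := fun x => by rw [← sum_add_sum_compl {e ℓ}, sum_singleton, add_assoc] }
  refine prob_prob_le_abs_lt_le haffine hΛ hδ hδτ (fun ℓ => Subset.rfl) (fun ℓ => by simp)
    (fun k k' hk => disjoint_singleton.2 (he.ne hk)) (fun ℓ => ?_) fun ℓ x => ?_
  · rw [card_singleton, Nat.cast_one]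
    linarith [Real.one_le_rpow hΛ.1 (by norm_num : (0 : ℝ) ≤ 3 / 4)]
  · let y (b : Bool) : ι → Bool := Function.update x (e ℓ) b
    have hflip : (c ℓ + ∑ j, l ℓ j * rad (y true j)) - (c ℓ + ∑ j, l ℓ j * rad (y false j)) =
        2 * l ℓ (e ℓ) := by
      rw [add_sub_add_left_eq_sub, ← sum_sub_distrib, sum_eq_single (e ℓ)]
      · simp only [y, Function.update_self, rad]
        norm_num
        ring
      · intro j _ hj
        simp only [y, Function.update_of_ne hj, sub_self]
      · exact fun h => (h (mem_univ _)).elim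
    by_contra! hsmall
    have hy (b) := hsmall (y b) fun v hv => Function.update_of_ne (by simpa using hv) _ _
    have := abs_sub (c ℓ + ∑ j, l ℓ j * rad (y true j)) (c ℓ + ∑ j, l ℓ j * rad (y false j))
    rw [hflip, abs_mul, abs_two] at this
    linarith [hy true, hy false, hl ℓ]


end Family

/-! ### Quadratic forms in signs -/

section Quad

variable {ι : Type*} [Fintype ι]

/-- The quadratic form with matrix `S` in the signs attached to a point of the cube, plus a constant
`d`. -/
noncomputable def quad (S : Matrix ι ι ℝ) (d : ℝ) (x : ι → Bool) : ℝ :=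
  d + ∑ i, ∑ j, S i j * (rad (x i) * rad (x j))

variable {S T : Matrix ι ι ℝ} {d : ℝ}

lemma abs_rad (b : Bool) : |rad b| = 1 := by cases b <;> simp [rad]

lemma rad_mul_self (b : Bool) : rad b * rad b = 1 := by cases b <;> simp [rad]

lemma quad_sub_quad (hS : S.IsSymm) (x y : ι → Bool) : quad S d x - quad S d y =
    ∑ j, (∑ i, S i j * (rad (x i) - rad (y i))) * (rad (x j) + rad (y j)) := by
  have hcross : ∑ i, ∑ j, S i j * (rad (x i) * rad (y j)) =
      ∑ i, ∑ j, S i j * (rad (y i) * rad (x j)) := by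
    rw [sum_comm]
    exact sum_congr rfl fun i _ => sum_congr rfl fun j _ => by rw [hS.apply, mul_comm (rad _)]
  have hexpand (i j : ι) : S i j * (rad (x i) - rad (y i)) * (rad (x j) + rad (y j)) =
      S i j * (rad (x i) * rad (x j)) - S i j * (rad (y i) * rad (y j)) +
        (S i j * (rad (x i) * rad (y j)) - S i j * (rad (y i) * rad (x j))) := by ring
  simp only [sum_mul]
  rw [sum_comm]
  simp only [hexpand, sum_add_distrib, sum_sub_distrib, hcross, sub_self, add_zero, quad,
    add_sub_add_left_eq_sub]

lemma abs_quad_sub_quad_le {ε : ℝ} (h : ∀ i j, |S i j - T i j| ≤ ε) (x : ι → Bool) :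
    |quad S d x - quad T d x| ≤ Fintype.card ι ^ 2 * ε := by
  calc |quad S d x - quad T d x|
      = |∑ i, ∑ j, (S i j - T i j) * (rad (x i) * rad (x j))| := by
        simp only [quad, sub_mul, sum_sub_distrib, add_sub_add_left_eq_sub]
    _ ≤ ∑ i, ∑ j, |S i j - T i j| := by
        refine (abs_sum_le_sum_abs _ _).trans (sum_le_sum fun i _ => ?_)
        refine (abs_sum_le_sum_abs _ _).trans_eq (sum_congr rfl fun j _ => ?_)
        rw [abs_mul, abs_mul, abs_rad, abs_rad, mul_one, mul_one]
    _ ≤ ∑ _i : ι, ∑ _j : ι, ε := sum_le_sum fun i _ => sum_le_sum fun j _ => h i j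
    _ = Fintype.card ι ^ 2 * ε := by
        simp only [sum_const, card_univ, nsmul_eq_mul]
        ring

variable [DecidableEq ι]

lemma quad_update_sub_quad_update (hS : S.IsSymm) (a : ι) (x : ι → Bool) :
    quad S d (Function.update x a true) - quad S d (Function.update x a false) =
      4 * ∑ j ∈ {a}ᶜ, S a j * rad (x j) := by
  have hcoeff (j : ι) : ∑ i, S i j * (rad (Function.update x a true i) -
      rad (Function.update x a false i)) = 2 * S a j := by
    rw [sum_eq_single a (fun i _ hi => by simp [hi]) fun h => (h (mem_univ a)).elim]
    simp only [Function.update_self, rad]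
    norm_num
    ring
  rw [quad_sub_quad hS, ← sum_add_sum_compl {a}, sum_singleton, mul_sum]
  simp only [hcoeff, Function.update_self]
  rw [show rad true + rad false = 0 by simp [rad], mul_zero, zero_add]
  refine sum_congr rfl fun j hj => ?_
  have hja : j ≠ a := by simpa using hj
  rw [Function.update_of_ne hja, Function.update_of_ne hja]
  ring

lemma avoidable_abs_quad_lt (hS : S.IsSymm) {a b : ι} (hab : a ≠ b) :
    Avoidable {a, b} fun x => |quad S d x| < 2 * |S a b| := by
  intro x
  let y (p q : Bool) : ι → Bool := Function.update (Function.update x b q) a p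
  have hsecond : (quad S d (y true true) - quad S d (y false true)) -
      (quad S d (y true false) - quad S d (y false false)) = 8 * S a b := by
    rw [quad_update_sub_quad_update hS, quad_update_sub_quad_update hS, ← mul_sub,
      ← sum_sub_distrib, sum_eq_single b]
    · simp only [Function.update_self, rad]
      norm_num
      ring
    · intro j _ hj
      simp only [Function.update_of_ne hj, sub_self]
    · exact fun hb => (hb (by simpa using hab.symm)).elim
  have hy (p q v) (hv : v ∉ ({a, b} : Finset ι)) : y p q v = x v := by
    simp only [mem_insert, mem_singleton, not_or] at hv
    simp only [y, Function.update_of_ne hv.1, Function.update_of_ne hv.2]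
  by_contra! hsmall
  have hbound (p q) := abs_lt.1 (hsmall (y p q) (hy p q))
  have habs : |8 * S a b| < 8 * |S a b| := hsecond ▸ abs_lt.2
    ⟨by linarith [hbound true true, hbound true false, hbound false true, hbound false false],
      by linarith [hbound true true, hbound true false, hbound false true, hbound false false]⟩
  rw [abs_mul, abs_of_pos (by norm_num : (0 : ℝ) < 8)] at habs
  exact habs.false

end Quad

/-! ### A small-ball inequality for quadratic forms -/

lemma sq_expect_le_expect_sq {Ω : Type*} [Fintype Ω] (f : Ω → ℝ) :
    (𝔼 x, f x) ^ 2 ≤ 𝔼 x, f x ^ 2 := by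
  rw [Fintype.expect_eq_sum_div_card, Fintype.expect_eq_sum_div_card, div_pow, ← card_univ]
  rcases (univ : Finset Ω).eq_empty_or_nonempty with h | h
  · simp [h]
  · have hpos : (0 : ℝ) < #(univ : Finset Ω) := mod_cast h.card_pos
    rw [div_le_div_iff₀ (by positivity) hpos]
    nlinarith [sq_sum_le_card_mul_sum_sq (s := univ) (f := f)]

lemma sq_prob_le {ι β : Type*} [Fintype ι] [DecidableEq ι] [Fintype β] [Nonempty β]
    (p : (ι → β) → Prop) (U : Finset ι) : prob p ^ 2 ≤
      𝔼 w, 𝔼 w', prob fun z => p (U.piecewise w z) ∧ p (U.piecewise w' z) := by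
  classical
  have hand (z : ι → β) : (prob fun w => p (U.piecewise w z)) ^ 2 =
      𝔼 w, 𝔼 w', if p (U.piecewise w z) ∧ p (U.piecewise w' z) then (1 : ℝ) else 0 := by
    rw [sq, prob, expect_mul_expect]
    exact expect_congr rfl fun w _ => expect_congr rfl fun w' _ => by
      by_cases h : p (U.piecewise w z) <;> simp [h]
  calc prob p ^ 2 = (𝔼 z, prob fun w => p (U.piecewise w z)) ^ 2 := by
        rw [← expect_prob_comm, prob, ← expect_piecewise U]
        rfl
    _ ≤ 𝔼 z, (prob fun w => p (U.piecewise w z)) ^ 2 := sq_expect_le_expect_sq _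
    _ = 𝔼 w, 𝔼 w', prob fun z => p (U.piecewise w z) ∧ p (U.piecewise w' z) := by
        simp only [hand]
        rw [expect_comm]
        refine expect_congr rfl fun w _ => ?_
        rw [expect_comm]
        exact expect_congr rfl fun w' _ => expect_congr rfl fun z _ => by congr

section Matching

variable {ι κ : Type*} {S : Matrix ι ι ℝ} {τ : ℝ} {u v : κ → ι}

/-- The pairs `(u k, v k)` form a matching in the graph whose edges are the entries of `S` of
absolute value at least `τ`. -/
structure IsLargeMatching (S : Matrix ι ι ℝ) (τ : ℝ) (u v : κ → ι) : Prop where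
  injective_left : Function.Injective u
  injective_right : Function.Injective v
  ne : ∀ k k', u k ≠ v k'
  le_abs : ∀ k, τ ≤ |S (u k) (v k)|

lemma IsLargeMatching.cons {r : ℕ} {u v : Fin r → ι} (h : IsLargeMatching S τ u v) {i j : ι}
    (hi : ∀ k, u k ≠ i ∧ v k ≠ i) (hj : ∀ k, u k ≠ j ∧ v k ≠ j) (hij : i ≠ j) (hS : τ ≤ |S i j|) :
    IsLargeMatching S τ (Fin.cons i u : Fin (r + 1) → ι) (Fin.cons j v) where
  injective_left := Fin.cons_injective_iff.2 ⟨fun ⟨k, hk⟩ => (hi k).1 hk, h.injective_left⟩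
  injective_right := Fin.cons_injective_iff.2 ⟨fun ⟨k, hk⟩ => (hj k).2 hk, h.injective_right⟩
  ne := by
    simp only [Fin.forall_fin_succ, Fin.cons_zero, Fin.cons_succ]
    exact ⟨⟨hij, fun k => (hi k).2.symm⟩, fun k => ⟨(hj k).1, h.ne k⟩⟩
  le_abs := by
    simp only [Fin.forall_fin_succ, Fin.cons_zero, Fin.cons_succ]
    exact ⟨hS, h.le_abs⟩

lemma exists_isLargeMatching_or_cover (S : Matrix ι ι ℝ) (τ : ℝ) (r : ℕ) :
    (∃ u v : Fin r → ι, IsLargeMatching S τ u v) ∨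
      ∃ C : Finset ι, #C ≤ 2 * r ∧ (C : Set ι)ᶜ.Pairwise fun i j => |S i j| < τ := by
  classical
  induction r with
  | zero =>
    exact Or.inl ⟨Fin.elim0, Fin.elim0, fun k => k.elim0, fun k => k.elim0, fun k => k.elim0,
      fun k => k.elim0⟩
  | succ r ih =>
    obtain ⟨u, v, h⟩ | ⟨C, hC, hcover⟩ := ih
    · by_cases hcover :
        ((univ.image u ∪ univ.image v : Finset ι) : Set ι)ᶜ.Pairwise fun i j => |S i j| < τ
      · refine Or.inr ⟨_, ?_, hcover⟩
        calc #(univ.image u ∪ univ.image v) ≤ r + r :=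
              (card_union_le _ _).trans (add_le_add (card_image_le.trans_eq (card_fin r))
                (card_image_le.trans_eq (card_fin r)))
          _ ≤ 2 * (r + 1) := by lia
      · simp only [Set.Pairwise, Set.mem_compl_iff, mem_coe, mem_union, mem_image, mem_univ,
          true_and, not_or, not_exists] at hcover
        push Not at hcover
        obtain ⟨i, hi, j, hj, hij, hS⟩ := hcover
        exact Or.inl ⟨_, _, h.cons (fun k => ⟨hi.1 k, hi.2 k⟩) (fun k => ⟨hj.1 k, hj.2 k⟩) hij hS⟩
    · exact Or.inr ⟨C, hC.trans (by lia), hcover⟩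

variable [Fintype ι] [DecidableEq ι] {d δ : ℝ}

/-- Half the coefficient of the sign of `j ∉ U` in the difference of the quadratic forms at two
points which equal `w`, respectively `w'`, on `U` and agree off `U`. -/
noncomputable def decoupledCoeff (S : Matrix ι ι ℝ) (U : Finset ι) (w w' : ι → Bool) (j : ι) : ℝ :=
  ∑ i ∈ U, S i j * (rad (w i) - rad (w' i))

lemma quad_piecewise_sub_quad_piecewise (hS : S.IsSymm) (U : Finset ι) (w w' z : ι → Bool) :
    quad S d (U.piecewise w z) - quad S d (U.piecewise w' z) =
      ∑ j ∈ U, decoupledCoeff S U w w' j * (rad (w j) + rad (w' j)) +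
        ∑ j, (if j ∈ U then 0 else 2 * decoupledCoeff S U w w' j) * rad (z j) := by
  have hcoeff (j : ι) : ∑ i, S i j * (rad (U.piecewise w z i) - rad (U.piecewise w' z i)) =
      decoupledCoeff S U w w' j := by
    rw [decoupledCoeff, ← sum_add_sum_compl U, add_eq_left.2]
    · exact sum_congr rfl fun i hi => by simp [hi]
    · exact sum_eq_zero fun i hi => by simp [mem_compl.1 hi]
  rw [quad_sub_quad hS, ← sum_add_sum_compl U, ← sum_add_sum_compl U fun j => _ * rad (z j)]
  simp only [hcoeff]
  rw [sum_eq_zero (s := U) (f := fun j => _ * rad (z j)) fun j hj => by rw [if_pos hj, zero_mul],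
    zero_add]
  congr 1
  · exact sum_congr rfl fun j hj => by simp [hj]
  · refine sum_congr rfl fun j hj => ?_
    simp only [mem_compl.1 hj, not_false_eq_true, piecewise_eq_of_notMem, if_false]
    ring

variable [Fintype κ]

lemma prob_abs_quad_sub_lt_le (hS : S.IsSymm) {U : Finset ι} (hv : Function.Injective v)
    (hvU : ∀ k, v k ∉ U) {w w' : ι → Bool} {c : ℝ} (hc : 0 ≤ c)
    (h : c ≤ prob fun k => δ ≤ |decoupledCoeff S U w w' (v k)|) :
    prob (fun z => |quad S d (U.piecewise w z) - quad S d (U.piecewise w' z)| < 2 * δ) ≤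
      1 / √(c * Fintype.card κ + 1) := by
  classical
  simp only [quad_piecewise_sub_quad_piecewise hS]
  have hcard : #{k | δ ≤ |decoupledCoeff S U w w' (v k)|} ≤
      #{j | 2 * δ ≤ |if j ∈ U then 0 else 2 * decoupledCoeff S U w w' j|} := by
    refine card_le_card_of_injOn v (fun k hk => ?_) hv.injOn
    simpa [hvU k, abs_mul] using hk
  have hcount : c * Fintype.card κ ≤ #{k | δ ≤ |decoupledCoeff S U w w' (v k)|} := by
    rw [prob_eq_card_div] at h
    exact (mul_le_mul_of_nonneg_right h (by positivity)).trans
      ((div_mul_eq_mul_div _ _ _).trans_le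
        (div_le_of_le_mul₀ (by positivity) (by positivity) le_rfl))
  refine (littlewoodOfford _ _ _).trans (one_div_le_one_div_of_le (by positivity)
    (Real.sqrt_le_sqrt (add_le_add_left (hcount.trans (mod_cast hcard)) 1)))

lemma IsLargeMatching.prob_decoupledCoeff_le (h : IsLargeMatching S τ u v)
    (hκ : LargeEnough (Fintype.card κ : ℝ)) (hδ : 0 ≤ δ) (hδτ : Fintype.card κ * δ ≤ τ)
    (w' : ι → Bool) : prob (fun w => prob (fun k =>
      δ ≤ |decoupledCoeff S (univ.image u) w w' (v k)|) < 1 / 18) ≤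
        (Fintype.card κ : ℝ) ^ (-(1 / 7) : ℝ) := by
  have hlinear (w : ι → Bool) (k : κ) : decoupledCoeff S (univ.image u) w w' (v k) =
      -∑ i ∈ univ.image u, S i (v k) * rad (w' i) +
        ∑ i, (if i ∈ univ.image u then S i (v k) else 0) * rad (w i) := by
    simp only [decoupledCoeff, mul_sub, sum_sub_distrib, ite_mul, zero_mul, sum_ite_mem,
      univ_inter]
    ring
  simp only [hlinear]
  exact prob_prob_le_abs_linear_lt_le hκ hδ hδτ h.injective_left fun k => by
    simpa using h.le_abs k

lemma IsLargeMatching.sq_prob_abs_quad_lt_le (h : IsLargeMatching S τ u v) (hS : S.IsSymm)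
    (hκ : LargeEnough (Fintype.card κ : ℝ)) (hδ : 0 ≤ δ) (hδτ : Fintype.card κ * δ ≤ τ) :
    prob (fun x => |quad S d x| < δ) ^ 2 ≤
      (Fintype.card κ : ℝ) ^ (-(1 / 7) : ℝ) + 1 / √(1 / 18 * Fintype.card κ + 1) := by
  set U := univ.image u
  classical
  let few (w w' : ι → Bool) : Prop :=
    prob (fun k => δ ≤ |decoupledCoeff S U w w' (v k)|) < 1 / 18
  have hvU (k : κ) : v k ∉ U := by simpa [U] using fun k' => h.ne k' k
  have hclose (w w' : ι → Bool) :
      prob (fun z => |quad S d (U.piecewise w z)| < δ ∧ |quad S d (U.piecewise w' z)| < δ) ≤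
        prob (fun z => |quad S d (U.piecewise w z) - quad S d (U.piecewise w' z)| < 2 * δ) :=
    prob_mono fun z hz => (abs_sub _ _).trans_lt (by linarith [hz.1, hz.2])
  have hpair (w w' : ι → Bool) :
      prob (fun z => |quad S d (U.piecewise w z)| < δ ∧ |quad S d (U.piecewise w' z)| < δ) ≤
        (if few w w' then 1 else 0) + 1 / √(1 / 18 * Fintype.card κ + 1) := by
    split_ifs with hfew
    · exact prob_le_one.trans (le_add_of_nonneg_right (by positivity))
    · rw [zero_add]
      exact (hclose w w').trans
        (prob_abs_quad_sub_lt_le hS h.injective_right hvU (by norm_num) (not_lt.1 hfew))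
  refine (sq_prob_le _ U).trans ?_
  rw [expect_comm]
  refine expect_le univ_nonempty fun w' _ => ?_
  refine (expect_le_expect fun w _ => hpair w w').trans ?_
  rw [expect_add_distrib, Fintype.expect_const]
  exact add_le_add_left (h.prob_decoupledCoeff_le hκ hδ hδτ w') _

end Matching

/-! ### Families of quadratic forms -/

section Cover

variable {ι : Type*} [DecidableEq ι] {S : Matrix ι ι ℝ} {C : Finset ι}

/-- The matrix `S` with its off-diagonal entries indexed by pairs outside `C` replaced by `0`. -/
def coverPart (C : Finset ι) (S : Matrix ι ι ℝ) : Matrix ι ι ℝ :=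
  Matrix.of fun i j => if i ∉ C ∧ j ∉ C ∧ i ≠ j then 0 else S i j

lemma isSymm_coverPart (hS : S.IsSymm) : (coverPart C S).IsSymm := by
  ext i j
  simp only [Matrix.transpose_apply, coverPart, Matrix.of_apply, hS.apply i j]
  exact if_congr (by tauto) rfl rfl

lemma coverPart_apply_of_mem {i : ι} (hi : i ∈ C) (j : ι) : coverPart C S i j = S i j :=
  if_neg fun h => h.1 hi

lemma pairwise_coverPart_eq_zero :
    (C : Set ι)ᶜ.Pairwise fun i j => coverPart C S i j = 0 :=
  fun _ hi _ hj hij => if_pos ⟨hi, hj, hij⟩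

lemma abs_sub_coverPart_le {ε : ℝ} (hε : 0 ≤ ε)
    (h : (C : Set ι)ᶜ.Pairwise fun i j => |S i j| ≤ ε) (i j : ι) :
    |S i j - coverPart C S i j| ≤ ε := by
  rw [coverPart, Matrix.of_apply]
  split_ifs with hij
  · simpa using h hij.1 hij.2.1 hij.2.2
  · simpa using hε

lemma quad_eq_add_sum_compl [Fintype ι] (hS : S.IsSymm)
    (h : (C : Set ι)ᶜ.Pairwise fun i j => S i j = 0) (d : ℝ) (x : ι → Bool) : quad S d x =
      (d + ∑ i ∈ C, ∑ j ∈ C, S i j * (rad (x i) * rad (x j)) + ∑ i ∈ Cᶜ, S i i) +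
        ∑ j ∈ Cᶜ, (2 * ∑ i ∈ C, S i j * rad (x i)) * rad (x j) := by
  have hcross : ∑ i ∈ Cᶜ, ∑ j ∈ C, S i j * (rad (x i) * rad (x j)) =
      ∑ i ∈ C, ∑ j ∈ Cᶜ, S i j * (rad (x i) * rad (x j)) := by
    rw [sum_comm]
    exact sum_congr rfl fun i _ => sum_congr rfl fun j _ => by rw [hS.apply, mul_comm (rad _)]
  have hdiag : ∑ i ∈ Cᶜ, ∑ j ∈ Cᶜ, S i j * (rad (x i) * rad (x j)) = ∑ i ∈ Cᶜ, S i i := by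
    refine sum_congr rfl fun i hi => ?_
    rw [sum_eq_single_of_mem i hi, rad_mul_self, mul_one]
    exact fun j hj hji => by
      rw [h (by simpa using hi) (by simpa using hj) hji.symm, zero_mul]
  have hcoeff : ∑ j ∈ Cᶜ, (2 * ∑ i ∈ C, S i j * rad (x i)) * rad (x j) =
      2 * ∑ i ∈ C, ∑ j ∈ Cᶜ, S i j * (rad (x i) * rad (x j)) := by
    simp only [mul_assoc, sum_mul, mul_sum]
    exact sum_comm
  rw [quad, ← sum_add_sum_compl C]
  simp only [← sum_add_sum_compl C fun j => S _ j * (rad (x _) * rad (x j)), sum_add_distrib]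
  rw [hcross, hdiag, hcoeff]
  ring

/-- Off a set whose complement supports only diagonal entries of `S`, the quadratic form of `S` is
affine, because the square of a sign is `1`. -/
noncomputable def affineOffQuad [Fintype ι] (hS : S.IsSymm)
    (h : (C : Set ι)ᶜ.Pairwise fun i j => S i j = 0) (d : ℝ) : AffineOff C (quad S d) where
  const x := d + ∑ i ∈ C, ∑ j ∈ C, S i j * (rad (x i) * rad (x j)) + ∑ i ∈ Cᶜ, S i i
  coeff j x := 2 * ∑ i ∈ C, S i j * rad (x i)
  dependsOn_const x y hxy := by
    have (i) (hi : i ∈ C) : x i = y i := hxy i hi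
    dsimp only
    congr 2
    exact sum_congr rfl fun i hi => sum_congr rfl fun j hj => by rw [this i hi, this j hj]
  dependsOn_coeff j x y hxy := by
    have (i) (hi : i ∈ C) : x i = y i := hxy i hi
    dsimp only
    congr 1
    exact sum_congr rfl fun i hi => by rw [this i hi]
  eq_add_sum := quad_eq_add_sum_compl hS h d

end Cover

section Family

variable {ι Λ : Type*} [Fintype ι] [DecidableEq ι] [Fintype Λ] {S : Λ → Matrix ι ι ℝ}
  {d : Λ → ℝ} {δ τ : ℝ}

theorem prob_prob_le_abs_quad_lt_le_of_cover {C : Λ → Finset ι} {a b : Λ → ι} {ε : ℝ}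
    (hΛ : LargeEnough (Fintype.card Λ : ℝ)) (hδ : 0 ≤ δ) (hε : 0 ≤ ε)
    (hδτ : (Fintype.card Λ : ℝ) * (δ + (Fintype.card ι : ℝ) ^ 2 * ε) ≤ 2 * τ)
    (hS : ∀ ℓ, (S ℓ).IsSymm) (hab : ∀ ℓ, a ℓ ≠ b ℓ)
    (hdisj : Pairwise fun k k' => Disjoint ({a k, b k} : Finset ι) {a k', b k'})
    (hlarge : ∀ ℓ, τ ≤ |S ℓ (a ℓ) (b ℓ)|)
    (hC : ∀ ℓ, #(C ℓ) + 2 ≤ 10 * (Fintype.card Λ : ℝ) ^ (3 / 4 : ℝ))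
    (hcover : ∀ ℓ, (C ℓ : Set ι)ᶜ.Pairwise fun i j => |S ℓ i j| ≤ ε) :
    prob (fun x => prob (fun ℓ => δ ≤ |quad (S ℓ) (d ℓ) x|) < 1 / 18) ≤
      (Fintype.card Λ : ℝ) ^ (-(1 / 7) : ℝ) := by
  let C' (ℓ : Λ) : Finset ι := C ℓ ∪ {a ℓ, b ℓ}
  let T (ℓ : Λ) : Matrix ι ι ℝ := coverPart (C' ℓ) (S ℓ)
  have hT (ℓ) : (T ℓ).IsSymm := isSymm_coverPart (hS ℓ)
  have hTlarge (ℓ) : τ ≤ |T ℓ (a ℓ) (b ℓ)| :=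
    (hlarge ℓ).trans_eq (congrArg _ (coverPart_apply_of_mem (by simp [C']) _).symm)
  have hclose (ℓ x) : |quad (S ℓ) (d ℓ) x - quad (T ℓ) (d ℓ) x| ≤ Fintype.card ι ^ 2 * ε :=
    abs_quad_sub_quad_le (abs_sub_coverPart_le hε ((hcover ℓ).mono
      (Set.compl_subset_compl.2 (coe_subset.2 subset_union_left)))) x
  have hC' (ℓ) : #(C' ℓ) ≤ 10 * (Fintype.card Λ : ℝ) ^ (3 / 4 : ℝ) :=
    (hC ℓ).trans' (mod_cast (card_union_le _ _).trans (add_le_add_right card_le_two _))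
  have havoid (ℓ) : Avoidable {a ℓ, b ℓ} fun x => |quad (T ℓ) (d ℓ) x| < 2 * τ := by
    intro x
    obtain ⟨y, hy, hlargeAt⟩ := avoidable_abs_quad_lt (hT ℓ) (hab ℓ) x
    refine ⟨y, hy, fun hlt => hlargeAt (hlt.trans_le ?_)⟩
    linarith [hTlarge ℓ]
  refine (prob_mono fun x hx => ?_).trans (prob_prob_le_abs_lt_le
    (fun ℓ => affineOffQuad (hT ℓ) pairwise_coverPart_eq_zero (d ℓ)) hΛ (by positivity) hδτ
    (fun ℓ => subset_union_right) (fun ℓ => card_le_two) hdisj hC' havoid)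
  refine (prob_mono fun ℓ hℓ => ?_).trans_lt hx
  linarith [abs_sub_abs_le_abs_sub (quad (T ℓ) (d ℓ) x) (quad (S ℓ) (d ℓ) x),
    abs_sub_comm (quad (T ℓ) (d ℓ) x) (quad (S ℓ) (d ℓ) x), hclose ℓ x]

lemma rpow_add_one_div_sqrt_le {μ : ℝ} (hμ : 1 ≤ μ) :
    μ ^ (-(1 / 7) : ℝ) + 1 / √(1 / 18 * μ + 1) ≤ (3 * μ ^ (-(1 / 14) : ℝ)) ^ 2 := by
  have h0 : 0 < μ := by positivity
  have hsquare : (3 * μ ^ (-(1 / 14) : ℝ)) ^ 2 = 9 * μ ^ (-(1 / 7) : ℝ) := by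
    rw [mul_pow, ← Real.rpow_mul_natCast h0.le]
    norm_num
  have hsqrt : 1 / √(1 / 18 * μ + 1) ≤ 5 * μ ^ (-(1 / 7) : ℝ) := by
    calc 1 / √(1 / 18 * μ + 1) ≤ 1 / (√μ / 5) := by
          refine one_div_le_one_div_of_le (by positivity) (Real.le_sqrt_of_sq_le ?_)
          rw [div_pow, Real.sq_sqrt h0.le]
          linarith
      _ = 5 * μ ^ (-(1 / 2) : ℝ) := by
          rw [one_div_div, Real.rpow_neg h0.le, ← Real.sqrt_eq_rpow, div_eq_mul_inv]
      _ ≤ 5 * μ ^ (-(1 / 7) : ℝ) := by gcongr; norm_num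
  linarith [show 0 ≤ μ ^ (-(1 / 7) : ℝ) by positivity]

theorem prob_prob_le_abs_quad_lt_le_of_isLargeMatching [Nonempty Λ] {κ : Type*} [Fintype κ]
    {u v : Λ → κ → ι} (h : ∀ ℓ, IsLargeMatching (S ℓ) τ (u ℓ) (v ℓ)) (hS : ∀ ℓ, (S ℓ).IsSymm)
    (hκ : LargeEnough (Fintype.card κ : ℝ)) (hδ : 0 ≤ δ)
    (hδτ : (Fintype.card κ : ℝ) * δ ≤ τ) :
    prob (fun x => prob (fun ℓ => δ ≤ |quad (S ℓ) (d ℓ) x|) < 1 / 18) ≤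
      4 * (Fintype.card κ : ℝ) ^ (-(1 / 14) : ℝ) := by
  have hsmall (ℓ) : prob (fun x => |quad (S ℓ) (d ℓ) x| < δ) ≤
      3 * (Fintype.card κ : ℝ) ^ (-(1 / 14) : ℝ) :=
    le_of_sq_le_sq (((h ℓ).sq_prob_abs_quad_lt_le (hS ℓ) hκ hδ hδτ).trans
      (rpow_add_one_div_sqrt_le hκ.1)) (by positivity)
  have hmarkov := (pow_mul_prob_prob_lt_le (f := fun ℓ => quad (S ℓ) (d ℓ)) (δ := δ)
    (by norm_num : (1 / 18 : ℝ) ≤ 1) 1).trans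
    (prob_le_of_forall_prod fun g : Fin 1 → Λ => (prob_mono fun x hx => hx 0).trans (hsmall (g 0)))
  have : 0 ≤ (Fintype.card κ : ℝ) ^ (-(1 / 14) : ℝ) := by positivity
  linarith

/-- The sizes of families to which the bound on the number of small quadratic forms applies: half a
family, and a matching of size `m ^ (3 / 4)`, are large enough, and the powers of `m` in the
resulting bounds absorb the constants. -/
structure LargeFamily (m : ℝ) : Prop where
  largeEnough_of_half_le : ∀ μ, m / 2 ≤ μ → LargeEnough μ
  largeEnough_ceil : LargeEnough ⌈m ^ (3 / 4 : ℝ)⌉₊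
  two_le_rpow : 2 ≤ m ^ (17 / 168 : ℝ)
  four_le_rpow : 4 ≤ m ^ (1 / 84 : ℝ)

lemma eventually_largeFamily : ∀ᶠ m : ℝ in Filter.atTop, LargeFamily m := by
  obtain ⟨μ₀, hμ₀⟩ := Filter.eventually_atTop.1 eventually_largeEnough
  filter_upwards [Filter.eventually_ge_atTop (2 * μ₀),
    (tendsto_rpow_atTop (by norm_num : (0 : ℝ) < 3 / 4)).eventually_ge_atTop μ₀,
    (tendsto_rpow_atTop (by norm_num : (0 : ℝ) < 17 / 168)).eventually_ge_atTop 2,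
    (tendsto_rpow_atTop (by norm_num : (0 : ℝ) < 1 / 84)).eventually_ge_atTop 4]
    with m hm hceil h2 h4
  exact ⟨fun μ hμ => hμ₀ μ (by linarith), hμ₀ _ (hceil.trans (Nat.le_ceil _)), h2, h4⟩

namespace LargeFamily

variable {m μ : ℝ}

lemma one_le (h : LargeFamily m) : 1 ≤ m := by
  linarith [(h.largeEnough_of_half_le (m / 2) le_rfl).1]

lemma two_mul_ceil_rpow_add_two_le (h : LargeFamily m) (hμ : m / 2 ≤ μ) :
    2 * (⌈m ^ (3 / 4 : ℝ)⌉₊ : ℝ) + 2 ≤ 10 * μ ^ (3 / 4 : ℝ) := by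
  have hm := h.one_le
  have hhalf : m ^ (3 / 4 : ℝ) ≤ 2 * μ ^ (3 / 4 : ℝ) := by
    calc m ^ (3 / 4 : ℝ) ≤ (2 * μ) ^ (3 / 4 : ℝ) := by gcongr; linarith
      _ = 2 ^ (3 / 4 : ℝ) * μ ^ (3 / 4 : ℝ) := Real.mul_rpow (by norm_num) (by linarith)
      _ ≤ 2 ^ (1 : ℝ) * μ ^ (3 / 4 : ℝ) := by
          have : 0 ≤ μ := by linarith
          gcongr <;> norm_num
      _ = 2 * μ ^ (3 / 4 : ℝ) := by rw [Real.rpow_one]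
  have htwo : 2 ≤ m ^ (3 / 4 : ℝ) :=
    h.two_le_rpow.trans (Real.rpow_le_rpow_of_exponent_le hm (by norm_num))
  linarith [Nat.ceil_lt_add_one (by positivity : 0 ≤ m ^ (3 / 4 : ℝ))]

lemma rpow_half_le (h : LargeFamily m) (hμ : m / 2 ≤ μ) :
    μ ^ (-(1 / 7) : ℝ) ≤ m ^ (-(1 / 24) : ℝ) := by
  have hm := h.one_le
  calc μ ^ (-(1 / 7) : ℝ) ≤ (m / 2) ^ (-(1 / 7) : ℝ) :=
        Real.rpow_le_rpow_of_nonpos (by positivity) hμ (by norm_num)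
    _ = 2 ^ (1 / 7 : ℝ) * m ^ (-(1 / 7) : ℝ) := by
        rw [Real.div_rpow (by positivity) (by norm_num), Real.rpow_neg (by norm_num : (0:ℝ) ≤ 2),
          div_inv_eq_mul, mul_comm]
    _ ≤ 2 ^ (1 : ℝ) * m ^ (-(1 / 7) : ℝ) := by gcongr <;> norm_num
    _ ≤ m ^ (17 / 168 : ℝ) * m ^ (-(1 / 7) : ℝ) := by
        rw [Real.rpow_one]
        gcongr
        exact h.two_le_rpow
    _ = m ^ (-(1 / 24) : ℝ) := by
        rw [← Real.rpow_add (by positivity)]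
        norm_num

lemma ceil_rpow_le (h : LargeFamily m) {k : ℕ} (hk : m ≤ k) : ⌈m ^ (3 / 4 : ℝ)⌉₊ ≤ k :=
  Nat.ceil_le.2 (((Real.rpow_le_rpow_of_exponent_le h.one_le (by norm_num)).trans_eq
    (Real.rpow_one m)).trans hk)

lemma four_mul_ceil_rpow_le (h : LargeFamily m) :
    4 * (⌈m ^ (3 / 4 : ℝ)⌉₊ : ℝ) ^ (-(1 / 14) : ℝ) ≤ m ^ (-(1 / 24) : ℝ) := by
  have hm := h.one_le
  calc 4 * (⌈m ^ (3 / 4 : ℝ)⌉₊ : ℝ) ^ (-(1 / 14) : ℝ)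
      ≤ m ^ (1 / 84 : ℝ) * (m ^ (3 / 4 : ℝ)) ^ (-(1 / 14) : ℝ) := by
        exact mul_le_mul h.four_le_rpow (Real.rpow_le_rpow_of_nonpos (by positivity)
          (Nat.le_ceil _) (by norm_num)) (by positivity) (by positivity)
    _ = m ^ (-(1 / 24) : ℝ) := by
        rw [← Real.rpow_mul (by positivity), ← Real.rpow_add (by positivity)]
        norm_num

end LargeFamily

lemma card_div_two_le_card_subtype {p : Λ → Prop} [DecidablePred p] (hp : 1 / 2 ≤ prob p) :
    (Fintype.card Λ : ℝ) / 2 ≤ Fintype.card {ℓ // p ℓ} := by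
  rw [prob_eq_card_div, ← Fintype.card_subtype] at hp
  have hpos : (0 : ℝ) < Fintype.card Λ :=
    (Nat.cast_nonneg _).lt_of_ne fun h => by norm_num [← h] at hp
  linarith [(le_div_iff₀ hpos).1 hp]

lemma prob_prob_lt_half_le {Ω : Type*} [Fintype Ω] {p : Λ → Prop} [DecidablePred p]
    (hp : 1 / 2 ≤ prob p) (q : Ω → Λ → Prop) (c : ℝ) :
    prob (fun x => prob (q x) < c / 2) ≤
      prob (fun x => prob (fun ℓ : {ℓ // p ℓ} => q x ℓ) < c) := by
  refine prob_mono fun x hx => ?_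
  nlinarith [prob_subtype_mul_prob_le p (q x), prob_nonneg (p := fun ℓ : {ℓ // p ℓ} => q x ℓ)]

variable {a b : Λ → ι} {lam : ℝ}

lemma card_le_card_of_pairwise_disjoint_pair
    (hdisj : Pairwise fun k k' => Disjoint ({a k, b k} : Finset ι) {a k', b k'}) :
    Fintype.card Λ ≤ Fintype.card ι := by
  refine Fintype.card_le_of_injective a fun k k' hkk' => ?_
  by_contra hne
  exact disjoint_left.1 (hdisj hne) (mem_insert_self _ _) (by simp [hkk'])

lemma mul_add_sq_mul_le {k n : ℝ} (hk : k ≤ n) (hn : 1 ≤ n) (hlam : 0 ≤ lam) :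
    k * (lam / (4 * n ^ 4) + n ^ 2 * (lam / (4 * n ^ 3))) ≤ 2 * (lam / 3) := by
  calc k * (lam / (4 * n ^ 4) + n ^ 2 * (lam / (4 * n ^ 3)))
      ≤ n * (lam / (4 * n ^ 4) + n ^ 2 * (lam / (4 * n ^ 3))) := by gcongr
    _ = lam / 4 / n ^ 3 + lam / 4 := by field_simp
    _ ≤ lam / 4 + lam / 4 := by
        exact add_le_add_left (div_le_self (by positivity) (one_le_pow₀ hn)) _
    _ ≤ 2 * (lam / 3) := by linarith

lemma prob_prob_le_abs_quad_lt_le_of_half_isLargeMatching (hΛ : LargeFamily (Fintype.card Λ))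
    (hδ : 0 ≤ δ) (hδτ : ⌈(Fintype.card Λ : ℝ) ^ (3 / 4 : ℝ)⌉₊ * δ ≤ τ)
    (hS : ∀ ℓ, (S ℓ).IsSymm) {p : Λ → Prop} (hp : 1 / 2 ≤ prob p)
    (h : ∀ ℓ, p ℓ → ∃ u v : Fin ⌈(Fintype.card Λ : ℝ) ^ (3 / 4 : ℝ)⌉₊ → ι,
      IsLargeMatching (S ℓ) τ u v) :
    prob (fun x => prob (fun ℓ => δ ≤ |quad (S ℓ) (d ℓ) x|) < 1 / 18 / 2) ≤
      (Fintype.card Λ : ℝ) ^ (-(1 / 24) : ℝ) := by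
  classical
  have : Nonempty {ℓ // p ℓ} := by
    rw [← Fintype.card_pos_iff, ← Nat.cast_pos (α := ℝ)]
    linarith [hΛ.one_le, card_div_two_le_card_subtype hp]
  choose u v huv using fun ℓ : {ℓ // p ℓ} => h ℓ ℓ.2
  refine (prob_prob_lt_half_le hp _ _).trans
    ((prob_prob_le_abs_quad_lt_le_of_isLargeMatching huv (fun ℓ => hS ℓ) ?_ hδ ?_).trans ?_)
  · simpa using hΛ.largeEnough_ceil
  · simpa using hδτ
  · simpa using hΛ.four_mul_ceil_rpow_le

lemma prob_prob_le_abs_quad_lt_le_of_half_cover (hΛ : LargeFamily (Fintype.card Λ)) {ε : ℝ}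
    (hδ : 0 ≤ δ) (hε : 0 ≤ ε)
    (hδτ : (Fintype.card Λ : ℝ) * (δ + (Fintype.card ι : ℝ) ^ 2 * ε) ≤ 2 * τ)
    (hS : ∀ ℓ, (S ℓ).IsSymm) (hab : ∀ ℓ, a ℓ ≠ b ℓ)
    (hdisj : Pairwise fun k k' => Disjoint ({a k, b k} : Finset ι) {a k', b k'})
    (hlarge : ∀ ℓ, τ ≤ |S ℓ (a ℓ) (b ℓ)|) {p : Λ → Prop} (hp : 1 / 2 ≤ prob p)
    (h : ∀ ℓ, p ℓ → ∃ C : Finset ι, #C ≤ 2 * ⌈(Fintype.card Λ : ℝ) ^ (3 / 4 : ℝ)⌉₊ ∧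
      (C : Set ι)ᶜ.Pairwise fun i j => |S ℓ i j| < ε) :
    prob (fun x => prob (fun ℓ => δ ≤ |quad (S ℓ) (d ℓ) x|) < 1 / 18 / 2) ≤
      (Fintype.card Λ : ℝ) ^ (-(1 / 24) : ℝ) := by
  classical
  have hcard := card_div_two_le_card_subtype hp
  have hle : (Fintype.card {ℓ // p ℓ} : ℝ) ≤ Fintype.card Λ := mod_cast Fintype.card_subtype_le p
  choose C hC hcover using fun ℓ : {ℓ // p ℓ} => h ℓ ℓ.2
  have hsize (ℓ) : (#(C ℓ) : ℝ) + 2 ≤ 10 * (Fintype.card {ℓ // p ℓ} : ℝ) ^ (3 / 4 : ℝ) := by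
    refine le_trans ?_ (hΛ.two_mul_ceil_rpow_add_two_le hcard)
    exact mod_cast add_le_add_left (hC ℓ) 2
  exact (prob_prob_lt_half_le hp _ _).trans
    ((prob_prob_le_abs_quad_lt_le_of_cover (hΛ.largeEnough_of_half_le _ hcard) hδ hε
      ((mul_le_mul_of_nonneg_right hle (by positivity)).trans hδτ) (fun ℓ => hS ℓ)
      (fun ℓ => hab ℓ) (fun ℓ ℓ' hne => hdisj (Subtype.coe_injective.ne hne))
      (fun ℓ => hlarge ℓ) hsize fun ℓ i hi j hj hij => (hcover ℓ hi hj hij).le).trans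
        (hΛ.rpow_half_le hcard))

theorem prob_prob_le_abs_quad_lt_le (hΛ : LargeFamily (Fintype.card Λ)) (hlam : 0 ≤ lam)
    (hS : ∀ ℓ, (S ℓ).IsSymm) (hab : ∀ ℓ, a ℓ ≠ b ℓ)
    (hdisj : Pairwise fun k k' => Disjoint ({a k, b k} : Finset ι) {a k', b k'})
    (hlarge : ∀ ℓ, lam / 3 ≤ |S ℓ (a ℓ) (b ℓ)|) :
    prob (fun x => prob (fun ℓ =>
      lam / (4 * (Fintype.card ι : ℝ) ^ 4) ≤ |quad (S ℓ) (d ℓ) x|) < 1 / 36) ≤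
        (Fintype.card Λ : ℝ) ^ (-(1 / 24) : ℝ) := by
  classical
  set n : ℝ := (Fintype.card ι : ℝ)
  have hn : (Fintype.card Λ : ℝ) ≤ n :=
    Nat.cast_le.2 (card_le_card_of_pairwise_disjoint_pair hdisj)
  have hn1 : 1 ≤ n := hΛ.one_le.trans hn
  let r := ⌈(Fintype.card Λ : ℝ) ^ (3 / 4 : ℝ)⌉₊
  have hr : r * (lam / (4 * n ^ 4)) ≤ lam / (4 * n ^ 3) := by
    calc r * (lam / (4 * n ^ 4)) ≤ n * (lam / (4 * n ^ 4)) := by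
          gcongr
          exact (Nat.cast_le.2 (hΛ.ceil_rpow_le le_rfl)).trans hn
      _ = lam / (4 * n ^ 3) := by field_simp
  let rich (ℓ : Λ) : Prop := ∃ u v : Fin r → ι, IsLargeMatching (S ℓ) (lam / (4 * n ^ 3)) u v
  rw [show (1 / 36 : ℝ) = 1 / 18 / 2 by norm_num]
  by_cases hrich : 1 / 2 ≤ prob rich
  · exact prob_prob_le_abs_quad_lt_le_of_half_isLargeMatching hΛ (by positivity) hr hS hrich
      fun ℓ hℓ => hℓ
  · have : Nonempty Λ := Fintype.card_pos_iff.1 (mod_cast hΛ.one_le)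
    have hpoor : 1 / 2 ≤ prob fun ℓ => ¬ rich ℓ := by
      linarith [prob_add_prob_not (p := rich)]
    exact prob_prob_le_abs_quad_lt_le_of_half_cover hΛ (by positivity) (by positivity)
      (mul_add_sq_mul_le hn hn1 hlam) hS hab hdisj hlarge hpoor fun ℓ hℓ =>
        (exists_isLargeMatching_or_cover (S ℓ) _ r).resolve_left hℓ

end Family

/-! ### Permanents -/

section SumEquiv

variable {R α α' β β' : Type*} [CommSemiring R] [Fintype α] [DecidableEq α] [Fintype α']
  [DecidableEq α'] [Fintype β] [DecidableEq β] [Fintype β'] [DecidableEq β']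

lemma sum_equiv_congr (e : α ≃ α') (f : β ≃ β') (F : α' → β' → R) :
    ∑ σ : α ≃ β, ∏ i, F (e i) (f (σ i)) = ∑ σ : α' ≃ β', ∏ i, F i (σ i) := by
  rw [← Equiv.sum_comp (Equiv.equivCongr e f)]
  refine sum_congr rfl fun σ _ => ?_
  simp [← Equiv.prod_comp e]

lemma sum_equiv_option (F : Option α → β → R) :
    ∑ σ : Option α ≃ β, ∏ i, F i (σ i) =
      ∑ b, F none b * ∑ τ : α ≃ {b' // b' ≠ b}, ∏ i, F (some i) (τ i) := by
  rw [← Equiv.sum_comp (Equiv.sigmaFiberEquiv fun e : Option α ≃ β => e none),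
    Fintype.sum_sigma]
  refine sum_congr rfl fun b _ => ?_
  rw [mul_sum, ← Equiv.sum_comp (Equiv.optionSubtype (α := α) b)]
  refine sum_congr rfl fun ⟨e, he⟩ _ => ?_
  simp [Equiv.sigmaFiberEquiv, Fintype.prod_option, he]

lemma sum_equiv_eq_sum_mul (a : α) (F : α → β → R) :
    ∑ σ : α ≃ β, ∏ i, F i (σ i) =
      ∑ b, F a b * ∑ τ : {i // i ≠ a} ≃ {b' // b' ≠ b}, ∏ i, F i.1 (τ i) := by
  rw [← sum_equiv_congr (Equiv.optionSubtypeNe a) (Equiv.refl β)]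
  exact sum_equiv_option fun i b => F (Equiv.optionSubtypeNe a i) b

/-- Removing a point from a finite set, as a subtype or as a finite set. -/
def neEquivErase {s : Finset α} (a : s) : {x : s // x ≠ a} ≃ {x // x ∈ s.erase a} where
  toFun x := ⟨x.1, mem_erase.2 ⟨Subtype.coe_injective.ne x.2, x.1.2⟩⟩
  invFun x := ⟨⟨x, mem_of_mem_erase x.2⟩, fun h => ne_of_mem_erase x.2 (congrArg Subtype.val h)⟩

end SumEquiv

section PermOn

variable {m n m' n' : ℕ}

lemma permOn_eq_sum_row (M : Matrix (Fin m) (Fin n) ℝ) {A : Finset (Fin m)} {a : Fin m}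
    (ha : a ∈ A) (B : Finset (Fin n)) :
    permOn M A B = ∑ j ∈ B, M a j * permOn M (A.erase a) (B.erase j) := by
  rw [← sum_coe_sort B]
  refine (sum_equiv_eq_sum_mul (⟨a, ha⟩ : {x // x ∈ A}) fun i (j : {y // y ∈ B}) => M i.1 j.1).trans
    (sum_congr rfl fun j _ => congrArg _ ?_)
  exact sum_equiv_congr (neEquivErase ⟨a, ha⟩) (neEquivErase j) fun i j => M i.1 j.1

lemma permOn_transpose (M : Matrix (Fin m) (Fin n) ℝ) (A : Finset (Fin m))
    (B : Finset (Fin n)) : permOn M.transpose B A = permOn M A B := by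
  rw [permOn, permOn, ← Equiv.sum_comp (Equiv.symmEquiv {x // x ∈ A} {y // y ∈ B})]
  refine sum_congr rfl fun σ _ => ?_
  rw [← Equiv.prod_comp σ]
  simp

lemma permOn_comm {M : Matrix (Fin n) (Fin n) ℝ} (hM : M.IsSymm) (A B : Finset (Fin n)) :
    permOn M A B = permOn M B A := by
  rw [← permOn_transpose, hM.eq]

lemma permOn_eq_sum_col (M : Matrix (Fin m) (Fin n) ℝ) (A : Finset (Fin m))
    {B : Finset (Fin n)} {b : Fin n} (hb : b ∈ B) :
    permOn M A B = ∑ i ∈ A, M i b * permOn M (A.erase i) (B.erase b) := by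
  rw [← permOn_transpose, permOn_eq_sum_row _ hb]
  simp only [permOn_transpose, Matrix.transpose_apply]

lemma permOn_map (M : Matrix (Fin m') (Fin n') ℝ) (f : Fin m ↪ Fin m') (g : Fin n ↪ Fin n')
    (A : Finset (Fin m)) (B : Finset (Fin n)) :
    permOn M (A.map f) (B.map g) = permOn (M.submatrix f g) A B :=
  (sum_equiv_congr (A.equivMap f) (B.equivMap g) fun i j => M i.1 j.1).symm

end PermOn

section AddLast

variable {n : ℕ} (A : Finset (Fin n))

/-- The subset of `{0, …, n}` obtained from a subset `A` of `{0, …, n - 1}` by adding `n`: the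
rows (or columns) of the extended matrix which extend the submatrix with rows `A`. -/
def addLast : Finset (Fin (n + 1)) :=
  insert (Fin.last n) (A.map Fin.castSuccEmb)

lemma last_notMem_map_castSuccEmb : Fin.last n ∉ A.map Fin.castSuccEmb := by
  simp [(Fin.castSucc_lt_last _).ne]

lemma last_mem_addLast : Fin.last n ∈ addLast A :=
  mem_insert_self _ _

lemma sum_addLast {R : Type*} [AddCommMonoid R] (f : Fin (n + 1) → R) :
    ∑ i ∈ addLast A, f i = f (Fin.last n) + ∑ i ∈ A, f i.castSucc := by
  rw [addLast, sum_insert (last_notMem_map_castSuccEmb A), sum_map]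
  rfl

lemma card_addLast : #(addLast A) = #A + 1 := by
  rw [addLast, card_insert_of_notMem (last_notMem_map_castSuccEmb A), card_map]

lemma compl_addLast : (addLast A)ᶜ = Aᶜ.map Fin.castSuccEmb := by
  ext i
  cases i using Fin.lastCases <;> simp [addLast, (Fin.castSucc_lt_last _).ne]

lemma erase_castSucc_addLast (j : Fin n) :
    (addLast A).erase j.castSucc = addLast (A.erase j) := by
  ext i
  cases i using Fin.lastCases <;>
    simp [addLast, (Fin.castSucc_lt_last _).ne, (Fin.castSucc_lt_last _).ne']

lemma erase_last_addLast : (addLast A).erase (Fin.last n) = A.map Fin.castSuccEmb :=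
  erase_insert (last_notMem_map_castSuccEmb A)

lemma disjoint_compl_addLast {A B : Finset (Fin n)} (h : Disjoint Aᶜ Bᶜ) :
    Disjoint (addLast A)ᶜ (addLast B)ᶜ := by
  rwa [compl_addLast, compl_addLast, disjoint_map]

end AddLast

/-! ### The extended permanent as a quadratic form -/

section ExtSym

variable {n : ℕ} (M : Matrix (Fin n) (Fin n) ℝ) (ω : Fin (n + 1) → Fin (n + 1) → Bool)

lemma extSym_castSucc (i j : Fin n) : extSym (n + 1) M ω i.castSucc j.castSucc = M i j := by
  simp [extSym]

lemma extSym_castSucc_last (i : Fin n) :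
    extSym (n + 1) M ω i.castSucc (Fin.last n) = rad (ω i.castSucc (Fin.last n)) := by
  simp [extSym, Fin.le_last]

lemma extSym_last_castSucc (i : Fin n) :
    extSym (n + 1) M ω (Fin.last n) i.castSucc = rad (ω i.castSucc (Fin.last n)) := by
  simp [extSym, (Fin.castSucc_lt_last i).not_ge]

lemma extSym_last_last :
    extSym (n + 1) M ω (Fin.last n) (Fin.last n) = rad (ω (Fin.last n) (Fin.last n)) := by
  simp [extSym]

lemma permOn_extSym_map_castSuccEmb (A B : Finset (Fin n)) :
    permOn (extSym (n + 1) M ω) (A.map Fin.castSuccEmb) (B.map Fin.castSuccEmb) =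
      permOn M A B := by
  rw [permOn_map]
  exact congrArg (permOn · A B) (Matrix.ext (extSym_castSucc M ω))

lemma permOn_extSym_map_castSuccEmb_addLast (A B : Finset (Fin n)) :
    permOn (extSym (n + 1) M ω) (A.map Fin.castSuccEmb) (addLast B) =
      ∑ i ∈ A, rad (ω i.castSucc (Fin.last n)) * permOn M (A.erase i) B := by
  rw [permOn_eq_sum_col _ _ (last_mem_addLast B), erase_last_addLast, sum_map]
  refine sum_congr rfl fun i _ => ?_
  rw [← map_erase, permOn_extSym_map_castSuccEmb]
  exact congrArg (· * _) (extSym_castSucc_last M ω i)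

lemma permOn_extSym_addLast (A B : Finset (Fin n)) :
    permOn (extSym (n + 1) M ω) (addLast A) (addLast B) =
      rad (ω (Fin.last n) (Fin.last n)) * permOn M A B +
        ∑ i ∈ A, ∑ j ∈ B, permOn M (A.erase i) (B.erase j) *
          (rad (ω i.castSucc (Fin.last n)) * rad (ω j.castSucc (Fin.last n))) := by
  rw [permOn_eq_sum_row _ (last_mem_addLast A), erase_last_addLast, sum_addLast,
    erase_last_addLast, permOn_extSym_map_castSuccEmb, extSym_last_last, sum_comm (s := A)]
  refine congrArg _ (sum_congr rfl fun j _ => ?_)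
  rw [erase_castSucc_addLast, permOn_extSym_map_castSuccEmb_addLast, extSym_last_castSucc,
    mul_sum]
  exact sum_congr rfl fun i _ => by ring

/-- The matrix of the subpermanents `per M[A \ {i}, B \ {j}]`, extended by zero outside `A × B`:
the coefficients of the permanent of the extension of `M[A, B]` in the new entries. -/
noncomputable def permMinor (A B : Finset (Fin n)) : Matrix (Fin n) (Fin n) ℝ :=
  Matrix.of fun i j => if i ∈ A ∧ j ∈ B then permOn M (A.erase i) (B.erase j) else 0

lemma permMinor_of_mem {A B : Finset (Fin n)} {i j : Fin n} (hi : i ∈ A) (hj : j ∈ B) :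
    permMinor M A B i j = permOn M (A.erase i) (B.erase j) :=
  if_pos ⟨hi, hj⟩

lemma sum_permMinor_mul (A B : Finset (Fin n)) (f : Fin n → Fin n → ℝ) :
    ∑ i, ∑ j, permMinor M A B i j * f i j =
      ∑ i ∈ A, ∑ j ∈ B, permOn M (A.erase i) (B.erase j) * f i j := by
  simp only [permMinor, Matrix.of_apply, ite_and, ite_mul, zero_mul, sum_ite_irrel,
    sum_const_zero, sum_ite_mem, univ_inter]

end ExtSym

section SymmPart

variable {ι : Type*}

/-- The symmetric part `(S + Sᵀ) / 2` of a matrix, which defines the same quadratic form. -/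
noncomputable def symmPart (S : Matrix ι ι ℝ) : Matrix ι ι ℝ :=
  Matrix.of fun i j => (S i j + S j i) / 2

lemma isSymm_symmPart (S : Matrix ι ι ℝ) : (symmPart S).IsSymm := by
  ext i j
  simp [symmPart, add_comm]

lemma quad_symmPart [Fintype ι] (S : Matrix ι ι ℝ) (d : ℝ) (x : ι → Bool) :
    quad (symmPart S) d x = quad S d x := by
  have hswap : ∑ i, ∑ j, S j i * (rad (x i) * rad (x j)) =
      ∑ i, ∑ j, S i j * (rad (x i) * rad (x j)) := by
    rw [sum_comm]
    exact sum_congr rfl fun i _ => sum_congr rfl fun j _ => by rw [mul_comm (rad (x i))]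
  calc quad (symmPart S) d x = d + (∑ i, ∑ j, S i j * (rad (x i) * rad (x j)) +
        ∑ i, ∑ j, S j i * (rad (x i) * rad (x j))) / 2 := by
        simp only [quad, symmPart, Matrix.of_apply, ← sum_add_distrib, sum_div, ← add_mul,
          div_mul_eq_mul_div]
    _ = quad S d x := by rw [hswap, add_self_div_two, quad]

end SymmPart

lemma permOn_extSym_addLast_eq_quad {n : ℕ} (M : Matrix (Fin n) (Fin n) ℝ)
    (ω : Fin (n + 1) → Fin (n + 1) → Bool) (A B : Finset (Fin n)) :
    permOn (extSym (n + 1) M ω) (addLast A) (addLast B) =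
      quad (symmPart (permMinor M A B)) (rad (ω (Fin.last n) (Fin.last n)) * permOn M A B)
        (fun i => ω i.castSucc (Fin.last n)) := by
  rw [quad_symmPart, quad, sum_permMinor_mul, permOn_extSym_addLast]

/-! ### Enlarging a heavy submatrix -/

/-- `(A', B')` arises from `(A, B)` by passing to a submatrix with one more row and column, such
that all rows and columns which are still missing come from indices missing in `A` or in `B`, and
such that complement-disjointness is preserved. -/
structure IsEnlargement {α : Type*} [Fintype α] [DecidableEq α] (A B A' B' : Finset α) : Prop where
  card_left : #A' = #A + 1
  card_right : #B' = #B + 1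
  disjoint_compl : Disjoint A'ᶜ B'ᶜ
  compl_left_subset : A'ᶜ ⊆ Aᶜ ∪ Bᶜ
  compl_right_subset : B'ᶜ ⊆ Aᶜ ∪ Bᶜ

section Enlargement

variable {α : Type*} [Fintype α] [DecidableEq α] {A B : Finset α} {a b c : α}

lemma mem_of_notMem_of_disjoint_compl (h : Disjoint Aᶜ Bᶜ) (ha : a ∉ A) : a ∈ B :=
  notMem_compl.1 (disjoint_left.1 h (mem_compl.2 ha))

lemma isEnlargement_insert (h : Disjoint Aᶜ Bᶜ) (ha : a ∉ A) (hb : b ∉ B) :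
    IsEnlargement A B (insert a A) (insert b B) where
  card_left := card_insert_of_notMem ha
  card_right := card_insert_of_notMem hb
  disjoint_compl := h.mono (compl_subset_compl.2 (subset_insert _ _))
    (compl_subset_compl.2 (subset_insert _ _))
  compl_left_subset := (compl_subset_compl.2 (subset_insert _ _)).trans subset_union_left
  compl_right_subset := (compl_subset_compl.2 (subset_insert _ _)).trans subset_union_right

lemma isEnlargement_insert_erase (h : Disjoint Aᶜ Bᶜ) (ha : a ∉ A) (hb : b ∉ B) (hc : c ∉ B)
    (hbc : b ≠ c) : IsEnlargement A B (insert a A) ((insert b (insert c B)).erase a) where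
  card_left := card_insert_of_notMem ha
  card_right := by
    have haB := mem_of_notMem_of_disjoint_compl h ha
    rw [card_erase_of_mem (by simp [haB]), card_insert_of_notMem (by simp [hbc, hb]),
      card_insert_of_notMem hc, Nat.add_sub_cancel]
  disjoint_compl := disjoint_left.2 fun x hx hx' => by
    have hxA : x ≠ a ∧ x ∉ A := by simpa using hx
    simp [hxA.1, mem_of_notMem_of_disjoint_compl h hxA.2] at hx'
  compl_left_subset := (compl_subset_compl.2 (subset_insert _ _)).trans subset_union_left
  compl_right_subset x hx := by
    by_cases hxa : x = a <;> simp_all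

end Enlargement

section LargeCoefficient

variable {n : ℕ} {M : Matrix (Fin n) (Fin n) ℝ} {A B : Finset (Fin n)} {a b c : Fin n}

lemma symmPart_permMinor_insert (ha : a ∉ A) (haB : a ∈ B) (hb : b ∉ B) (hbA : b ∈ A) :
    symmPart (permMinor M (insert a A) (insert b B)) a b =
      (permOn M A B + permOn M ((insert a A).erase b) ((insert b B).erase a)) / 2 := by
  rw [symmPart, Matrix.of_apply, permMinor_of_mem M (by simp) (by simp),
    permMinor_of_mem M (by simp [hbA]) (by simp [haB]), erase_insert ha, erase_insert hb]

lemma symmPart_permMinor_insert_erase (ha : a ∉ A) (hb : b ∉ B) (hbA : b ∈ A) (hc : c ∉ B)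
    (hcA : c ∈ A) (hbc : b ≠ c) :
    symmPart (permMinor M (insert a A) ((insert b (insert c B)).erase a)) b c =
      (permOn M ((insert a A).erase b) ((insert b B).erase a) +
        permOn M ((insert a A).erase c) ((insert c B).erase a)) / 2 := by
  have hab : b ≠ a := ne_of_mem_of_not_mem hbA ha
  have hac : c ≠ a := ne_of_mem_of_not_mem hcA ha
  rw [symmPart, Matrix.of_apply, permMinor_of_mem M (by simp [hbA]) (by simp [hac]),
    permMinor_of_mem M (by simp [hcA]) (by simp [hab]), erase_right_comm (a := a) (b := c),
    erase_right_comm (a := a) (b := b), erase_insert_of_ne hbc, erase_insert hc,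
    erase_insert (by simp [hbc, hb])]

lemma abs_div_three_le_or (x y z : ℝ) : |x| / 3 ≤ |(x + y) / 2| ∨ |x| / 3 ≤ |(x + z) / 2| ∨
    |x| / 3 ≤ |(y + z) / 2| := by
  have h : |x| ≤ |(x + y) / 2| + |(x + z) / 2| + |(y + z) / 2| := by
    calc |x| = |(x + y) / 2 + (x + z) / 2 - (y + z) / 2| := by ring_nf
      _ ≤ _ := (abs_sub _ _).trans (by gcongr; exact abs_add_le _ _)
  by_contra! hlt
  linarith

/-- The pair `(A', B')` is an enlargement of `(A, B)` for which the quadratic form given by the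
permanent of the extension has, at the off-diagonal position `(a, b)`, a coefficient at least a
third of `per M[A, B]`. -/
structure IsLargeEnlargement (M : Matrix (Fin n) (Fin n) ℝ) (A B A' B' : Finset (Fin n))
    (a b : Fin n) : Prop extends IsEnlargement A B A' B' where
  ne : a ≠ b
  pair_subset : {a, b} ⊆ Aᶜ ∪ Bᶜ
  le_abs : |permOn M A B| / 3 ≤ |symmPart (permMinor M A' B') a b|

lemma isLargeEnlargement_insert (hM : M.IsSymm) (h : Disjoint Aᶜ Bᶜ)
    (ha : Aᶜ = {a}) (hb : Bᶜ = {b}) :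
    IsLargeEnlargement M A B (insert a A) (insert b B) a b := by
  have haA : a ∉ A := by simp [← mem_compl, ha]
  have hbB : b ∉ B := by simp [← mem_compl, hb]
  have haB := mem_of_notMem_of_disjoint_compl h haA
  have hbA := mem_of_notMem_of_disjoint_compl h.symm hbB
  have hswapA : (insert a A).erase b = B := by
    rw [← compl_compl B, hb, ← compl_compl A, ha]; ext; simp
  have hswapB : (insert b B).erase a = A := by
    rw [← compl_compl B, hb, ← compl_compl A, ha]; ext; simp
  refine ⟨isEnlargement_insert h haA hbB, ne_of_mem_of_not_mem haB hbB, by simp [ha, hb], ?_⟩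
  rw [symmPart_permMinor_insert haA haB hbB hbA, hswapA, hswapB, permOn_comm hM B,
    add_self_div_two]
  linarith [abs_nonneg (permOn M A B)]

/-- With `f₀ = per M[A, B]`, three different enlargements have coefficients `(f₀ + f₁) / 2`,
`(f₀ + f₂) / 2` and `(f₁ + f₂) / 2`, of which `f₀` is a combination with coefficients `±1`. -/
lemma exists_isLargeEnlargement_of_notMem (h : Disjoint Aᶜ Bᶜ) (ha : a ∉ A) (hb : b ∉ B)
    (hc : c ∉ B) (hbc : b ≠ c) :
    ∃ A' B' a' b', IsLargeEnlargement M A B A' B' a' b' := by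
  have haB := mem_of_notMem_of_disjoint_compl h ha
  have hbA := mem_of_notMem_of_disjoint_compl h.symm hb
  have hcA := mem_of_notMem_of_disjoint_compl h.symm hc
  rcases abs_div_three_le_or (permOn M A B) (permOn M ((insert a A).erase b) ((insert b B).erase a))
    (permOn M ((insert a A).erase c) ((insert c B).erase a)) with hlarge | hlarge | hlarge
  · exact ⟨_, _, a, b, isEnlargement_insert h ha hb, ne_of_mem_of_not_mem haB hb,
      by simp [insert_subset_iff, ha, hb],
      by rwa [symmPart_permMinor_insert ha haB hb hbA]⟩
  · exact ⟨_, _, a, c, isEnlargement_insert h ha hc, ne_of_mem_of_not_mem haB hc,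
      by simp [insert_subset_iff, ha, hc],
      by rwa [symmPart_permMinor_insert ha haB hc hcA]⟩
  · exact ⟨_, _, b, c, isEnlargement_insert_erase h ha hb hc hbc, hbc,
      by simp [insert_subset_iff, hb, hc],
      by rwa [symmPart_permMinor_insert_erase ha hb hbA hc hcA hbc]⟩

lemma exists_isLargeEnlargement (hM : M.IsSymm) (h : Disjoint Aᶜ Bᶜ) (hcard : #A = #B)
    (hA : #A < n) : ∃ A' B' a b, IsLargeEnlargement M A B A' B' a b := by
  have hAc : 0 < #Aᶜ := by rw [card_compl, Fintype.card_fin]; lia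
  have hBc : #Bᶜ = #Aᶜ := by rw [card_compl, card_compl, hcard]
  rcases (Nat.succ_le_of_lt hAc).eq_or_lt with hone | htwo
  · obtain ⟨a, ha⟩ := card_eq_one.1 hone.symm
    obtain ⟨b, hb⟩ := card_eq_one.1 (hBc.trans hone.symm)
    exact ⟨_, _, a, b, isLargeEnlargement_insert hM h ha hb⟩
  · obtain ⟨a, ha⟩ := card_pos.1 hAc
    obtain ⟨b, hb, c, hc, hbc⟩ := one_lt_card.1 (hBc ▸ htwo)
    exact exists_isLargeEnlargement_of_notMem h (mem_compl.1 ha) (mem_compl.1 hb)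
      (mem_compl.1 hc) hbc

end LargeCoefficient

/-! ### Selecting the surviving submatrices -/

section Cdisj

variable {n : ℕ} {ι κ : Type*}

lemma cdisj_sumElim_iff {A : ι → Finset (Fin n)} {B : κ → Finset (Fin n)} :
    cdisj (Sum.elim A B) ↔ cdisj A ∧ cdisj B ∧ ∀ i j, Disjoint (A i)ᶜ (B j)ᶜ := by
  simp only [cdisj, Sum.forall, Sum.elim_inl, Sum.elim_inr, ne_eq, Sum.inl.injEq, Sum.inr.injEq,
    reduceCtorEq, not_false_eq_true, true_imp_iff]
  exact ⟨fun h => ⟨fun i => (h.1 i).1, fun i => (h.2 i).2, fun i => (h.1 i).2⟩,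
    fun h => ⟨fun i => ⟨h.1 i, h.2.2 i⟩, fun j => ⟨fun i => (h.2.2 i j).symm, h.2.1 j⟩⟩⟩

lemma cdisj_comp {S : ι → Finset (Fin n)} (h : cdisj S) {e : κ → ι} (he : e.Injective) :
    cdisj (S ∘ e) :=
  fun i j hij => h (e i) (e j) (he.ne hij)

lemma cdisj_addLast {S : ι → Finset (Fin n)} (h : cdisj S) : cdisj (addLast ∘ S) :=
  fun i j hij => disjoint_compl_addLast (h i j hij)

variable {A B A' B' : ι → Finset (Fin n)}

lemma disjoint_compl_union_compl (h : cdisj (Sum.elim A B)) {i j : ι} (hij : i ≠ j) :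
    Disjoint ((A i)ᶜ ∪ (B i)ᶜ) ((A j)ᶜ ∪ (B j)ᶜ) := by
  obtain ⟨hA, hB, hAB⟩ := cdisj_sumElim_iff.1 h
  simp only [disjoint_union_left, disjoint_union_right]
  exact ⟨⟨hA i j hij, (hAB j i).symm⟩, hAB i j, hB i j hij⟩

lemma cdisj_sumElim_of_isEnlargement (h : cdisj (Sum.elim A B))
    (h' : ∀ i, IsEnlargement (A i) (B i) (A' i) (B' i)) : cdisj (Sum.elim A' B') := by
  refine cdisj_sumElim_iff.2 ⟨fun i j hij => ?_, fun i j hij => ?_, fun i j => ?_⟩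
  · exact (disjoint_compl_union_compl h hij).mono (h' i).compl_left_subset (h' j).compl_left_subset
  · exact (disjoint_compl_union_compl h hij).mono (h' i).compl_right_subset
      (h' j).compl_right_subset
  · obtain rfl | hij := eq_or_ne i j
    · exact (h' i).disjoint_compl
    · exact (disjoint_compl_union_compl h hij).mono (h' i).compl_left_subset
        (h' j).compl_right_subset

end Cdisj

section LastColumn

variable {n : ℕ}

/-- Exchanging the off-diagonal entries of the last column of the Boolean data with another
vector. -/
def exchangeLastCol : (Fin (n + 1) → Fin (n + 1) → Bool) × (Fin n → Bool) ≃
    (Fin (n + 1) → Fin (n + 1) → Bool) × (Fin n → Bool) :=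
  Function.Involutive.toPerm
    (fun x => (fun i => Function.update (x.1 i) (Fin.last n)
      ((Fin.snoc x.2 (x.1 (Fin.last n) (Fin.last n)) : Fin (n + 1) → Bool) i),
      fun i => x.1 i.castSucc (Fin.last n)))
    fun x => by
      refine Prod.ext (funext fun i => ?_) (by simp)
      cases i using Fin.lastCases <;> simp

lemma exchangeLastCol_last (ω : Fin (n + 1) → Fin (n + 1) → Bool) (x : Fin n → Bool) :
    (exchangeLastCol (ω, x)).1 (Fin.last n) (Fin.last n) = ω (Fin.last n) (Fin.last n) :=
  (Function.update_self ..).trans (Fin.snoc_last ..)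

lemma exchangeLastCol_castSucc (ω : Fin (n + 1) → Fin (n + 1) → Bool) (x : Fin n → Bool)
    (i : Fin n) : (exchangeLastCol (ω, x)).1 i.castSucc (Fin.last n) = x i :=
  (Function.update_self ..).trans (Fin.snoc_castSucc ..)

lemma prob_lastCol_le {p : Bool → (Fin n → Bool) → Prop} {c : ℝ} (h : ∀ z, prob (p z) ≤ c) :
    prob (fun ω : Fin (n + 1) → Fin (n + 1) → Bool =>
      p (ω (Fin.last n) (Fin.last n)) fun i => ω i.castSucc (Fin.last n)) ≤ c :=
  prob_le_of_forall_resample exchangeLastCol fun ω => by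
    simpa only [exchangeLastCol_last, exchangeLastCol_castSucc] using h _

lemma probExt_eq_prob {n' : ℕ} (M : Matrix (Fin n') (Fin n') ℝ)
    (P : Matrix (Fin n) (Fin n) ℝ → Prop) :
    probExt n M P = prob fun ω => P (extSym n M ω) := by
  classical
  simp [probExt, prob_eq_card_div, pow_mul]

end LastColumn

lemma exists_embedding_of_le_card_mul_prob {Λ : Type*} [Fintype Λ] {p : Λ → Prop} {c : ℝ}
    (h : c ≤ Fintype.card Λ * prob p) : ∃ e : Fin ⌈c⌉₊ ↪ Λ, ∀ i, p (e i) := by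
  classical
  have hcard : ⌈c⌉₊ ≤ Fintype.card {ℓ // p ℓ} := by
    rw [Fintype.card_subtype, Nat.ceil_le]
    rwa [prob_eq_card_div, mul_div_cancel_of_imp'] at h
    simp +contextual [Fintype.card_eq_zero_iff]
  obtain ⟨e⟩ : Nonempty (Fin ⌈c⌉₊ ↪ {ℓ // p ℓ}) :=
    Function.Embedding.nonempty_of_card_le (by simpa using hcard)
  exact ⟨e.trans (Function.Embedding.subtype p), fun i => (e i).2⟩

section Survival

variable {n : ℕ} {Λ : Type*} [Fintype Λ] {M : Matrix (Fin n) (Fin n) ℝ} {lam : ℝ}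
  {A B A' B' : Λ → Finset (Fin n)} {a b : Λ → Fin n}

theorem prob_prob_le_abs_permOn_extSym_lt_le (hΛ : LargeFamily (Fintype.card Λ)) (hlam : 0 ≤ lam)
    (hAB : cdisj (Sum.elim A B)) (hheavy : ∀ ℓ, lam ≤ |permOn M (A ℓ) (B ℓ)|)
    (hlarge : ∀ ℓ, IsLargeEnlargement M (A ℓ) (B ℓ) (A' ℓ) (B' ℓ) (a ℓ) (b ℓ)) :
    prob (fun ω => prob (fun ℓ => lam / (4 * (n : ℝ) ^ 4) ≤
      |permOn (extSym (n + 1) M ω) (addLast (A' ℓ)) (addLast (B' ℓ))|) < 1 / 36) ≤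
        (Fintype.card Λ : ℝ) ^ (-(1 / 24) : ℝ) := by
  simp only [permOn_extSym_addLast_eq_quad]
  refine prob_lastCol_le (p := fun z x => prob (fun ℓ => lam / (4 * (n : ℝ) ^ 4) ≤
    |quad (symmPart (permMinor M (A' ℓ) (B' ℓ))) (rad z * permOn M (A' ℓ) (B' ℓ)) x|) < 1 / 36)
    fun z => ?_
  have hdisj : Pairwise fun k k' => Disjoint ({a k, b k} : Finset (Fin n)) {a k', b k'} :=
    fun k k' hk => (disjoint_compl_union_compl hAB hk).mono (hlarge k).pair_subset
      (hlarge k').pair_subset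
  simpa only [Fintype.card_fin] using prob_prob_le_abs_quad_lt_le hΛ hlam
    (fun ℓ => isSymm_symmPart _) (fun ℓ => (hlarge ℓ).ne) hdisj fun ℓ =>
      (div_le_div_of_nonneg_right (hheavy ℓ) (by norm_num)).trans (hlarge ℓ).le_abs

end Survival

theorem endgame_step_general :
    ∃ m₀ : ℕ, ∀ m : ℕ, m₀ ≤ m → ∀ lam : ℝ, 0 ≤ lam → ∀ n L : ℕ, 1 ≤ L → L < n →
      ∀ A B : Fin m → Finset (Fin n), cdisj (Sum.elim A B) →
        (∀ ℓ, (A ℓ).card = n - L) → (∀ ℓ, (B ℓ).card = n - L) →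
        ∀ M : Matrix (Fin n) (Fin n) ℝ, M.IsSymm →
          (∀ ℓ, lam ≤ |permOn M (A ℓ) (B ℓ)|) →
          1 - (m : ℝ) ^ (-(1 / 24 : ℝ)) ≤
            probExt (n + 1) M fun M' =>
              ∃ A' B' : Fin ⌈(m : ℝ) / 36⌉₊ → Finset (Fin (n + 1)),
                cdisj (Sum.elim A' B') ∧
                (∀ ℓ, (A' ℓ).card = n - L + 2) ∧ (∀ ℓ, (B' ℓ).card = n - L + 2) ∧
                ∀ ℓ, lam / (4 * (n : ℝ) ^ 4) ≤ |permOn M' (A' ℓ) (B' ℓ)| := by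
  obtain ⟨m₀, hm₀⟩ := Filter.eventually_atTop.1
    (tendsto_natCast_atTop_atTop.eventually eventually_largeFamily)
  refine ⟨m₀, fun m hm lam hlam n L hL hLn A B hAB hA hB M hM hheavy => ?_⟩
  choose A' B' a b hlarge using fun ℓ => exists_isLargeEnlargement hM
    ((cdisj_sumElim_iff.1 hAB).2.2 ℓ ℓ) ((hA ℓ).trans (hB ℓ).symm) (by rw [hA]; lia)
  have hbad := prob_prob_le_abs_permOn_extSym_lt_le (by simpa using hm₀ m hm) hlam hAB hheavy hlarge
  rw [Fintype.card_fin] at hbad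
  rw [probExt_eq_prob]
  refine one_sub_le_prob hbad fun ω hω => ?_
  obtain ⟨e, he⟩ := exists_embedding_of_le_card_mul_prob (c := (m : ℝ) / 36) <| by
    rw [Fintype.card_fin, div_eq_mul_one_div]
    exact mul_le_mul_of_nonneg_left (not_lt.1 hω) m.cast_nonneg
  have hdisj := cdisj_addLast <| cdisj_comp
    (cdisj_sumElim_of_isEnlargement hAB fun ℓ => (hlarge ℓ).toIsEnlargement)
    (e.injective.sumMap e.injective)
  rw [Sum.elim_comp_map, Sum.comp_elim] at hdisj
  refine ⟨_, _, hdisj, fun i => ?_, fun i => ?_, he⟩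
  · rw [Function.comp_apply, card_addLast, Function.comp_apply, (hlarge _).card_left, hA]
  · rw [Function.comp_apply, card_addLast, Function.comp_apply, (hlarge _).card_right, hB]

/-- Survival of heavy submatrices: for sufficiently large `m`, if
`A_1, …, A_m, B_1, …, B_m` are complement-disjoint subsets of `{1,…,n}` of size `n - L`
(where `1 ≤ L < n`), and `M` is a fixed symmetric `±1` matrix all of whose submatrices
`M[A_ℓ, B_ℓ]` are `λ`-heavy, then after adding a random symmetric row and column (with
i.i.d. Rademacher entries), with probability at least `1 - m^(-1/24)` there are
complement-disjoint subsets `A'_1, …, A'_{m'}, B'_1, …, B'_{m'}` of `{1,…,n+1}` of size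
`n - L + 2`, with `m' = ⌈m/36⌉`, all of whose submatrices are `λ/(4n^4)`-heavy. -/
theorem endgame_step :
    ∃ m₀ : ℕ, ∀ m : ℕ, m₀ ≤ m → ∀ lam : ℝ, 0 < lam → ∀ n L : ℕ, 1 ≤ L → L < n →
      ∀ A B : Fin m → Finset (Fin n), cdisj (Sum.elim A B) →
        (∀ ℓ, (A ℓ).card = n - L) → (∀ ℓ, (B ℓ).card = n - L) →
        ∀ M : Matrix (Fin n) (Fin n) ℝ, M.IsSymm →
          (∀ i j, M i j = 1 ∨ M i j = -1) →
          (∀ ℓ, lam ≤ |permOn M (A ℓ) (B ℓ)|) →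
          1 - (m : ℝ) ^ (-(1 / 24 : ℝ)) ≤
            probExt (n + 1) M fun M' =>
              ∃ A' B' : Fin ⌈(m : ℝ) / 36⌉₊ → Finset (Fin (n + 1)),
                cdisj (Sum.elim A' B') ∧
                (∀ ℓ, (A' ℓ).card = n - L + 2) ∧ (∀ ℓ, (B' ℓ).card = n - L + 2) ∧
                ∀ ℓ, lam / (4 * (n : ℝ) ^ 4) ≤ |permOn M' (A' ℓ) (B' ℓ)| := by
  obtain ⟨m₀, h⟩ := endgame_step_general
  exact ⟨m₀, fun m hm lam hlam n L hL hLn A B hAB hA hB M hM _ =>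
    h m hm lam hlam.le n L hL hLn A B hAB hA hB M hM⟩
end

section
/- Let M be an n×n real matrix and let A,B ⊆ {1,…,n} with |A| = |B| be such that |per M[A,B]| ≥ λ for some λ > 0. Suppose a ∈ B \ A and b_1, b_2 ∈ A \ B are distinct. Then there are distinct i, j ∈ {a, b_1, b_2} such that, setting A' = A ∪ {a} and B' = (B \ {a}) ∪ {i, j}, one has |per M[A',B']^{(i,j)} + per M[A',B']^{(j,i)}| ≥ λ/2. -/
/-!
Put `C = B \ {a}` and `P x = per M[(A ∪ {a}) \ {x}, C ∪ {x}]` for `x ∈ {a, b₁, b₂}`. None of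
`a, b₁, b₂` lies in `C`, so removing column `j` from `C ∪ {i, j}` leaves `C ∪ {i}`, and the quantity
to be bounded is `|P i + P j|`; moreover `P a = per M[A, B]`. Since
`2 P a = (P a + P b₁) + (P a + P b₂) - (P b₁ + P b₂)`, one of the three pair sums has absolute value
at least `2 |P a| / 3`.
-/

open Finset

section AbsPairSums

variable {G : Type*} [AddCommGroup G] [LinearOrder G] [IsOrderedAddMonoid G]

theorem two_nsmul_abs_le_add_abs_pair_sums (x y z : G) :
    2 • |x| ≤ |x + y| + |x + z| + |y + z| :=
  calc 2 • |x| = |(x + y) + (x + z) - (y + z)| := by rw [← abs_nsmul]; congr 1; abel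
    _ ≤ |(x + y) + (x + z)| + |y + z| := abs_sub _ _
    _ ≤ |x + y| + |x + z| + |y + z| := by gcongr; exact abs_add_le _ _

theorem exists_ne_two_nsmul_abs_le_three_nsmul_abs_add {α : Type*} [DecidableEq α] (f : α → G)
    {a b c : α} (hab : a ≠ b) (hac : a ≠ c) (hbc : b ≠ c) :
    ∃ i j : α, i ≠ j ∧ i ∈ ({a, b, c} : Finset α) ∧ j ∈ ({a, b, c} : Finset α) ∧
      2 • |f a| ≤ 3 • |f i + f j| := by
  by_contra! h
  have h_ab := h a b hab (by simp) (by simp)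
  have h_ac := h a c hac (by simp) (by simp)
  have h_bc := h b c hbc (by simp) (by simp)
  have h_sum := two_nsmul_abs_le_add_abs_pair_sums (f a) (f b) (f c)
  grind

end AbsPairSums

section EraseInsert

variable {α : Type*} [DecidableEq α] {s : Finset α} {i j : α}

theorem erase_insert_insert_right (hij : i ≠ j) (hj : j ∉ s) :
    (insert i (insert j s)).erase j = insert i s := by
  rw [erase_insert_of_ne hij, erase_insert hj]

theorem erase_insert_insert_left (hij : i ≠ j) (hi : i ∉ s) :
    (insert i (insert j s)).erase i = insert j s := by
  rw [insert_comm, erase_insert_insert_right hij.symm hi]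

end EraseInsert

theorem per_no_cancel_general {α G : Type*} [DecidableEq α] [AddCommGroup G] [LinearOrder G]
    [IsOrderedAddMonoid G] (f : Finset α → Finset α → G) {A B : Finset α} {a b₁ b₂ : α}
    (ha : a ∈ B \ A) (hb₁ : b₁ ∉ B) (hb₂ : b₂ ∉ B) (hb : b₁ ≠ b₂) :
    ∃ i j : α, i ≠ j ∧ i ∈ ({a, b₁, b₂} : Finset α) ∧ j ∈ ({a, b₁, b₂} : Finset α) ∧
      2 • |f A B| ≤
        3 • |f ((insert a A).erase i) ((insert i (insert j (B.erase a))).erase j) +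
          f ((insert a A).erase j) ((insert i (insert j (B.erase a))).erase i)| := by
  obtain ⟨haB, haA⟩ := mem_sdiff.mp ha
  have notMem_erase_of_mem : ∀ x ∈ ({a, b₁, b₂} : Finset α), x ∉ B.erase a := by
    simp [hb₁, hb₂]
  obtain ⟨i, j, hij, hi, hj, h⟩ := exists_ne_two_nsmul_abs_le_three_nsmul_abs_add
    (fun x ↦ f ((insert a A).erase x) (insert x (B.erase a)))
    (ne_of_mem_of_not_mem haB hb₁) (ne_of_mem_of_not_mem haB hb₂) hb
  refine ⟨i, j, hij, hi, hj, ?_⟩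
  rw [erase_insert_insert_right hij (notMem_erase_of_mem j hj),
    erase_insert_insert_left hij (notMem_erase_of_mem i hi)]
  simpa only [erase_insert haA, insert_erase haB] using h

/-- No-cancellation lemma: if `M[A,B]` is `λ`-heavy, `a ∈ B \ A` and `b₁, b₂ ∈ A \ B`
are distinct, then there are distinct `i, j ∈ {a, b₁, b₂}` such that, with
`A' = A ∪ {a}` and `B' = (B \ {a}) ∪ {i, j}`,
`|per M[A',B']^{(i,j)} + per M[A',B']^{(j,i)}| ≥ λ/2` (where `N^{(i,j)}` removes row `i`
and column `j`, i.e. `per M[A',B']^{(i,j)} = per M[A' \ {i}, B' \ {j}]`). -/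
theorem per_no_cancel (n : ℕ) (M : Matrix (Fin n) (Fin n) ℝ) (A B : Finset (Fin n))
    (hAB : A.card = B.card) (lam : ℝ) (hlam : 0 < lam)
    (hheavy : lam ≤ |permOn M A B|)
    (a b₁ b₂ : Fin n) (ha : a ∈ B \ A) (hb₁ : b₁ ∈ A \ B) (hb₂ : b₂ ∈ A \ B)
    (hb : b₁ ≠ b₂) :
    ∃ i j : Fin n, i ≠ j ∧ i ∈ ({a, b₁, b₂} : Finset (Fin n)) ∧
      j ∈ ({a, b₁, b₂} : Finset (Fin n)) ∧
      lam / 2 ≤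
        |permOn M ((insert a A).erase i) ((insert i (insert j (B.erase a))).erase j) +
          permOn M ((insert a A).erase j) ((insert i (insert j (B.erase a))).erase i)| := by
  obtain ⟨i, j, hij, hi, hj, h⟩ :=
    per_no_cancel_general (permOn M) ha (mem_sdiff.mp hb₁).2 (mem_sdiff.mp hb₂).2 hb
  exact ⟨i, j, hij, hi, hj, by simp only [nsmul_eq_mul, Nat.cast_ofNat] at h; linarith⟩
end
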